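/- Let α ∈ (2,3), σ > 0, n ≥ 2, and let γ ∈ H^{(α+1)/2+σ,2}(ℝ/ℤ,ℝⁿ) be injective and parametrized by arc-length. Then for every σ̂ with 0 < σ̂ < σ there exists a constant C < ∞ such that |R(γ,h)| ≤ C·‖h‖_{H^{3/2−σ̂,2}} for all h ∈ H^{(α+1)/2,2}(ℝ/ℤ,ℝⁿ); i.e. h ↦ R(γ,h) extends to a bounded linear functional on H^{3/2−σ̂,2}(ℝ/ℤ,ℝⁿ). -/

import Mathlib

open MeasureTheory Filter Set
open scoped RealInnerProductSpace ENNReal Topology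

noncomputable section

/-- `ℝⁿ` -/
abbrev Rn (n : ℕ) := EuclideanSpace ℝ (Fin n)

variable {n : ℕ}

/-- A 1-periodic curve is injective as a map on `ℝ/ℤ`. -/
def PerInjective (γ : ℝ → Rn n) : Prop :=
  ∀ u v : ℝ, γ u = γ v → ∃ k : ℤ, v = u + k

/-- `γ` is a regular curve: `γ'(u) ≠ 0` for all `u`. -/
def RegularCurve (γ : ℝ → Rn n) : Prop := ∀ u : ℝ, deriv γ u ≠ 0

/-- `γ` is parametrized by arc-length: `|γ'(u)| = 1` for all `u`. -/
def ArcLengthParam (γ : ℝ → Rn n) : Prop := ∀ u : ℝ, ‖deriv γ u‖ = 1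

/-- The length `L(γ) = ∫₀¹ |γ'(θ)| dθ` of the closed curve `γ`. -/
def curveLen (γ : ℝ → Rn n) : ℝ := ∫ θ in (0:ℝ)..1, ‖deriv γ θ‖

/-- The arc length `L(γ|_{[u,u+w]}) = |∫_u^{u+w} |γ'(θ)| dθ|`. -/
def arcLen (γ : ℝ → Rn n) (u w : ℝ) : ℝ := |∫ θ in u..(u + w), ‖deriv γ θ‖|

/-- The intrinsic distance `d_γ(u+w,u)`. -/
def idist (γ : ℝ → Rn n) (u w : ℝ) : ℝ :=
  min (arcLen γ u w) (curveLen γ - arcLen γ u w)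

/-- The integrand of the O'Hara energy `E^α`. -/
def ohIntegrand (α : ℝ) (γ : ℝ → Rn n) (u w : ℝ) : ℝ :=
  (1 / ‖γ (u + w) - γ u‖ ^ α - 1 / idist γ u w ^ α) * ‖deriv γ (u + w)‖ * ‖deriv γ u‖

/-- The O'Hara energy `E^α`, with values in `[0,∞]`. -/
def oharaE (α : ℝ) (γ : ℝ → Rn n) : ℝ≥0∞ :=
  ∫⁻ u in Ioc (0:ℝ) 1, ∫⁻ w in Ioo (-(1:ℝ)/2) (1/2), ENNReal.ofReal (ohIntegrand α γ u w)

/-- The O'Hara energy `E^α` as a real number. -/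
def oharaER (α : ℝ) (γ : ℝ → Rn n) : ℝ := (oharaE α γ).toReal

/-- `[−1/2,−ε] ∪ [ε,1/2]`, the `w`-section of `U_ε`. -/
def Wset (ε : ℝ) : Set ℝ := Icc (-(1:ℝ)/2) (-ε) ∪ Icc ε (1/2)

/-- The truncated O'Hara energy `E^α_ε`, an integral over `U_ε`. -/
def oharaEeps (α ε : ℝ) (γ : ℝ → Rn n) : ℝ :=
  ∫ u in Ioc (0:ℝ) 1, ∫ w in Wset ε, ohIntegrand α γ u w

/-- `F` has directional (Gâteaux) derivative `d` at `γ` in direction `h`. -/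
def HasDirDeriv (F : (ℝ → Rn n) → ℝ) (γ h : ℝ → Rn n) (d : ℝ) : Prop :=
  Tendsto (fun τ : ℝ => (F (γ + τ • h) - F γ) / τ) (𝓝[≠] (0:ℝ)) (𝓝 d)

/-- Squared Gagliardo seminorm `[f]²_{H^{s,2}}` of a 1-periodic map. -/
def gagliardoSq (s : ℝ) {E : Type*} [NormedAddCommGroup E] (f : ℝ → E) : ℝ≥0∞ :=
  ∫⁻ u in Ioc (0:ℝ) 1, ∫⁻ w in Ioo (-(1:ℝ)/2) (1/2),
    ENNReal.ofReal (‖f (u + w) - f u‖ ^ 2 / |w| ^ (1 + 2 * s))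

/-- Membership in the fractional Sobolev space `H^{1+σ,2}(ℝ/ℤ,ℝⁿ)`, `σ ∈ (0,1)`:
a 1-periodic `C¹` function whose derivative has finite Gagliardo seminorm of order `σ`. -/
def MemH1 (σ : ℝ) (γ : ℝ → Rn n) : Prop :=
  Function.Periodic γ 1 ∧ ContDiff ℝ 1 γ ∧ gagliardoSq σ (deriv γ) < ⊤

/-- The norm of `H^{1+σ,2}(ℝ/ℤ,ℝⁿ)`. -/
def H1Norm (σ : ℝ) (γ : ℝ → Rn n) : ℝ :=
  Real.sqrt (∫ u in Ioc (0:ℝ) 1, (‖γ u‖ ^ 2 + ‖deriv γ u‖ ^ 2)) +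
    Real.sqrt ((gagliardoSq σ (deriv γ)).toReal)

/-- Membership of a 1-periodic map in `L²(ℝ/ℤ)`. -/
def MemL2per {E : Type*} [NormedAddCommGroup E] (f : ℝ → E) : Prop :=
  Function.Periodic f 1 ∧ AEStronglyMeasurable f (volume : Measure ℝ) ∧
    IntegrableOn (fun u => ‖f u‖ ^ 2) (Ioc (0:ℝ) 1) volume

/-- Membership in the fractional Sobolev space `H^{s,2}(ℝ/ℤ)`, `s ∈ (0,1)`. -/
def MemHs0 (s : ℝ) {E : Type*} [NormedAddCommGroup E] (f : ℝ → E) : Prop :=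
  MemL2per f ∧ gagliardoSq s f < ⊤

/-- The norm of `H^{s,2}(ℝ/ℤ)` for `s ∈ (0,1)`: `‖f‖_{L²} + [f]_{H^{s,2}}`. -/
def Hs0Norm (s : ℝ) {E : Type*} [NormedAddCommGroup E] (f : ℝ → E) : ℝ :=
  Real.sqrt (∫ u in Ioc (0:ℝ) 1, ‖f u‖ ^ 2) + Real.sqrt ((gagliardoSq s f).toReal)

/-- The `k`-th Fourier coefficient (`j`-th component) of a 1-periodic curve. -/
def fCoef (γ : ℝ → Rn n) (k : ℤ) (j : Fin n) : ℂ :=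
  ∫ u in (0:ℝ)..1, (γ u j : ℂ) * Complex.exp ((-2) * (Real.pi : ℂ) * Complex.I * (k : ℂ) * (u : ℂ))

/-- Membership in `H^{s,2}(ℝ/ℤ,ℝⁿ)` via the Fourier characterization:
`((1+|k|²)^{s/2} γ̂(k))_k ∈ ℓ²`. -/
def MemHF (s : ℝ) (γ : ℝ → Rn n) : Prop :=
  Function.Periodic γ 1 ∧ Continuous γ ∧
    Summable (fun k : ℤ => (1 + (k : ℝ) ^ 2) ^ s * ∑ j, ‖fCoef γ k j‖ ^ 2)

/-- The squared Fourier norm of `H^{s,2}(ℝ/ℤ,ℝⁿ)`. -/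
def fNormSq (s : ℝ) (γ : ℝ → Rn n) : ℝ :=
  ∑' k : ℤ, (1 + (k : ℝ) ^ 2) ^ s * ∑ j, ‖fCoef γ k j‖ ^ 2

/-- C¹-norm of a 1-periodic map. -/
def c1Norm (f : ℝ → Rn n) : ℝ := ⨆ u : Icc (0:ℝ) 1, (‖f u.1‖ + ‖deriv f u.1‖)

/-- The integrand of `Q(γ,h)`. -/
def Qintegrand (α : ℝ) (γ h : ℝ → Rn n) (u w : ℝ) : ℝ :=
  ⟪deriv γ u, deriv h u⟫ / |w| ^ α
    - ⟪γ (u + w) - γ u, h (u + w) - h u⟫ / |w| ^ (α + 2)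

/-- The integrand of `R(γ,h)`. -/
def Rintegrand (α : ℝ) (γ h : ℝ → Rn n) (u w : ℝ) : ℝ :=
  2 * ⟪deriv γ u, deriv h u⟫ * (1 / ‖γ (u + w) - γ u‖ ^ α - 1 / |w| ^ α)
    - α * ⟪γ (u + w) - γ u, h (u + w) - h u⟫ *
        (1 / ‖γ (u + w) - γ u‖ ^ (α + 2) - 1 / |w| ^ (α + 2))

/-- `R(γ,h)`, an absolutely convergent double integral over `(ℝ/ℤ) × [−1/2,1/2]`. -/
def Rval (α : ℝ) (γ h : ℝ → Rn n) : ℝ :=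
  ∫ p in (Ioc (0:ℝ) 1) ×ˢ (Icc (-(1:ℝ)/2) (1/2)), Rintegrand α γ h p.1 p.2

/-- The weight `(1 + |k|)^c`. -/
def wt (c : ℝ) (k : ℤ) : ℝ≥0∞ := (1 + (k.natAbs : ℝ≥0∞)) ^ c

lemma wt_add (c d : ℝ) (k : ℤ) : wt (c + d) k = wt c k * wt d k := by
  unfold wt
  exact ENNReal.rpow_add _ _ (by simp) (by finiteness)

@[simp] lemma wt_zero (k : ℤ) : wt 0 k = 1 := by simp [wt]

@[simp] lemma wt_neg_arg (c : ℝ) (k : ℤ) : wt c (-k) = wt c k := by simp [wt]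

lemma wt_mono {c d : ℝ} (h : c ≤ d) (k : ℤ) : wt c k ≤ wt d k :=
  ENNReal.rpow_le_rpow_of_exponent_le (by simp) h

lemma one_le_wt {c : ℝ} (h : 0 ≤ c) (k : ℤ) : 1 ≤ wt c k := by
  simpa using wt_mono h k

lemma wt_mul_wt_neg (c : ℝ) (k : ℤ) : wt c k * wt (-c) k = 1 := by
  rw [← wt_add]; simp

lemma wt_sq (c : ℝ) (k : ℤ) : wt c k ^ 2 = wt (2 * c) k := by
  rw [two_mul, wt_add, sq]

lemma wt_submul {c : ℝ} (h : 0 ≤ c) (i j : ℤ) : wt c (i + j) ≤ wt c i * wt c j := by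
  unfold wt
  rw [← ENNReal.mul_rpow_of_nonneg _ _ h]
  refine ENNReal.rpow_le_rpow ?_ h
  have h1 : ((i + j).natAbs : ℝ≥0∞) ≤ i.natAbs + j.natAbs := by
    exact_mod_cast Int.natAbs_add_le i j
  calc 1 + ((i + j).natAbs : ℝ≥0∞) ≤ 1 + (i.natAbs + j.natAbs) := by gcongr
    _ ≤ (1 + (i.natAbs : ℝ≥0∞)) * (1 + (j.natAbs : ℝ≥0∞)) := by
      calc (1 : ℝ≥0∞) + (i.natAbs + j.natAbs) ≤ 1 + (i.natAbs + j.natAbs) + i.natAbs * j.natAbs :=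
            le_self_add
        _ = _ := by ring

lemma wt_eq_ofReal (c : ℝ) (k : ℤ) : wt c k = ENNReal.ofReal ((1 + |(k : ℝ)|) ^ c) := by
  unfold wt
  have : (0:ℝ) < 1 + |(k : ℝ)| := by positivity
  rw [← ENNReal.ofReal_rpow_of_pos this]
  congr 1
  rw [ENNReal.ofReal_add (by simp) (abs_nonneg _)]
  congr 1
  · simp
  · rw [← Int.cast_abs, ← Nat.cast_natAbs, ENNReal.ofReal_natCast]

lemma tsum_wt_lt_top {c : ℝ} (hc : 1 < c) : ∑' k : ℤ, wt (-c) k < ⊤ := by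
  have hs : Summable (fun k : ℤ => ((1 + |(k : ℝ)|) ^ (-c) : ℝ)) := by
    have h1 : Summable (fun k : ℤ => (|(k : ℝ)| ^ (-c) : ℝ)) := by
      exact Real.summable_abs_int_rpow hc
    refine Summable.of_norm_bounded_eventually h1 ?_
    rw [Filter.eventually_cofinite]
    refine (Set.finite_singleton (0:ℤ)).subset ?_
    intro k hk
    by_contra hne
    have hk0 : (0:ℝ) < |(k:ℝ)| := by simpa using hne
    apply hk
    rw [Real.norm_of_nonneg (by positivity)]
    exact Real.rpow_le_rpow_of_nonpos hk0 (by linarith) (by linarith)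
  simp_rw [wt_eq_ofReal]
  exact hs.tsum_ofReal_lt_top

lemma tsum_mul_sq_le {ι : Type*} (f g : ι → ℝ≥0∞) :
    (∑' i, f i * g i) ^ 2 ≤ (∑' i, f i ^ 2) * ∑' i, g i ^ 2 := by
  have key : ∑' i, f i * g i ≤ (∑' i, f i ^ 2) ^ (1/2:ℝ) * (∑' i, g i ^ 2) ^ (1/2:ℝ) := by
    rw [ENNReal.tsum_eq_iSup_sum]
    refine iSup_le fun s => ?_
    refine (ENNReal.inner_le_Lp_mul_Lq s f g Real.HolderConjugate.two_two).trans ?_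
    gcongr <;> simp_rw [ENNReal.rpow_two] <;> exact ENNReal.sum_le_tsum s
  calc _ ≤ ((∑' i, f i ^ 2) ^ (1/2:ℝ) * (∑' i, g i ^ 2) ^ (1/2:ℝ)) ^ 2 := by gcongr
    _ = _ := by
      rw [mul_pow, ← ENNReal.rpow_two, ← ENNReal.rpow_two, ← ENNReal.rpow_mul, ← ENNReal.rpow_mul]
      norm_num

/-- Convolution of sequences on `ℤ`. -/
def sconv (F G : ℤ → ℝ≥0∞) (k : ℤ) : ℝ≥0∞ := ∑' j, F j * G (k - j)

lemma tsum_shift (F : ℤ → ℝ≥0∞) (k : ℤ) : ∑' j, F (j - k) = ∑' j, F j :=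
  (Equiv.subRight k).tsum_eq F

lemma tsum_reflect (F : ℤ → ℝ≥0∞) (k : ℤ) : ∑' j, F (k - j) = ∑' j, F j :=
  (Equiv.subLeft k).tsum_eq F

lemma tsum_wt_sconv_le {c : ℝ} (hc : 0 ≤ c) (F G : ℤ → ℝ≥0∞) :
    ∑' k, wt c k * sconv F G k ≤ (∑' k, wt c k * F k) * ∑' k, wt c k * G k := by
  calc ∑' k, wt c k * sconv F G k = ∑' k, ∑' j, wt c k * (F j * G (k - j)) := by
        simp_rw [sconv, ENNReal.tsum_mul_left]
    _ ≤ ∑' k, ∑' j, (wt c j * F j) * (wt c (k - j) * G (k - j)) := by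
        refine ENNReal.tsum_le_tsum fun k => ENNReal.tsum_le_tsum fun j => ?_
        have := wt_submul hc j (k - j)
        rw [add_sub_cancel] at this
        calc _ ≤ (wt c j * wt c (k - j)) * (F j * G (k - j)) := by gcongr
          _ = _ := by ring
    _ = ∑' j, ∑' k, (wt c j * F j) * (wt c (k - j) * G (k - j)) := ENNReal.tsum_comm
    _ = _ := by
        simp_rw [ENNReal.tsum_mul_left]
        rw [← ENNReal.tsum_mul_right]
        congr 1; ext j
        rw [tsum_shift (fun k => wt c k * G k)]

lemma wt_cross {p q : ℝ} (hp : 0 ≤ p) (hq : 0 ≤ q) (i j : ℤ) :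
    wt (-p) i * wt (-q) j ≤ wt (-(p + q)) i + wt (-(p + q)) j := by
  have aux : ∀ {p : ℝ}, 0 ≤ p → ∀ i j : ℤ, i.natAbs ≤ j.natAbs → wt (-p) j ≤ wt (-p) i := by
    intro p hp i j hij
    unfold wt
    rw [ENNReal.rpow_neg, ENNReal.rpow_neg]
    gcongr
  rcases le_total i.natAbs j.natAbs with h | h
  · refine le_trans ?_ le_self_add
    rw [neg_add, wt_add]
    gcongr
    exact aux hq i j h
  · refine le_trans ?_ le_add_self
    rw [neg_add, wt_add]
    gcongr
    exact aux hp j i h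

lemma tsum_sconv_sq_le {p q : ℝ} (hp : 0 ≤ p) (hq : 0 ≤ q) (F G : ℤ → ℝ≥0∞) :
    ∑' k, sconv F G k ^ 2 ≤ (2 * ∑' k, wt (-(2 * (p + q))) k) *
      ((∑' k, (wt p k * F k) ^ 2) * ∑' k, (wt q k * G k) ^ 2) := by
  have h1 : ∀ k, sconv F G k ^ 2 ≤ (2 * ∑' k, wt (-(2 * (p + q))) k) *
      ∑' j, (wt p j * F j) ^ 2 * (wt q (k - j) * G (k - j)) ^ 2 := by
    intro k
    have e : sconv F G k = ∑' j, (wt (-p) j * wt (-q) (k - j)) *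
        ((wt p j * F j) * (wt q (k - j) * G (k - j))) := by
      unfold sconv
      congr 1; ext j
      calc F j * G (k - j) = (wt p j * wt (-p) j) * (wt q (k - j) * wt (-q) (k-j)) *
            (F j * G (k - j)) := by rw [wt_mul_wt_neg, wt_mul_wt_neg]; simp
        _ = _ := by ring
    rw [e]
    refine (tsum_mul_sq_le _ _).trans ?_
    simp_rw [mul_pow (_ * _)]
    gcongr
    calc ∑' j, (wt (-p) j * wt (-q) (k - j)) ^ 2
        ≤ ∑' j, (wt (-(2 * (p + q))) j + wt (-(2 * (p + q))) (k - j)) := by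
          refine ENNReal.tsum_le_tsum fun j => ?_
          rw [mul_pow, wt_sq, wt_sq]
          have := wt_cross (p := 2 * p) (q := 2 * q) (by positivity) (by positivity) j (k - j)
          simpa [mul_add, mul_neg] using this
      _ = _ := by
          rw [ENNReal.tsum_add, tsum_reflect (fun j => wt (-(2 * (p + q))) j), two_mul (tsum _)]
  refine (ENNReal.tsum_le_tsum h1).trans ?_
  rw [ENNReal.tsum_mul_left, ENNReal.tsum_comm]
  simp_rw [ENNReal.tsum_mul_left]
  gcongr
  rw [← ENNReal.tsum_mul_right]
  refine ENNReal.tsum_le_tsum fun j => ?_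
  rw [tsum_shift (fun k => (wt q k * G k) ^ 2)]

/-- A trilinear estimate in weighted `ℓ²` spaces: `B, B` of order `b` against `H` of order
`1/2 - s`, with `0 < s < b`. -/
lemma exists_trilinear_bound {s b : ℝ} (hs : 0 < s) (hb : s < b) :
    ∃ K : ℝ≥0∞, K ≠ ⊤ ∧ ∀ (B H : ℤ → ℝ≥0∞) (i : ℤ),
      sconv (sconv B B) H i ^ 2 ≤ K * wt (max 0 (s - 1/2)) i ^ 2 *
        ((∑' k, (wt b k * B k) ^ 2) ^ 2 * ∑' k, (wt (1/2 - s) k * H k) ^ 2) := by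
  set κ := max 0 (s - 1/2) with hκ
  have hκ0 : 0 ≤ κ := le_max_left _ _
  have hκ1 : s - 1/2 ≤ κ := le_max_right _ _
  have hκ2 : κ ≤ s := max_le hs.le (by linarith)
  refine ⟨2 * ∑' k, wt (-(2 * ((b - κ) + (1/2 - s + κ)))) k, ?_, fun B H i => ?_⟩
  · exact ENNReal.mul_ne_top (by simp) (tsum_wt_lt_top (by linarith)).ne
  set B' : ℤ → ℝ≥0∞ := fun k => wt κ k * B k
  set H' : ℤ → ℝ≥0∞ := fun k => wt (-κ) k * H k
  have h1 : sconv (sconv B B) H i ≤ wt κ i * ∑' m, B' m * sconv B' H' (i - m) := by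
    calc sconv (sconv B B) H i = ∑' l, ∑' m, B m * B (l - m) * H (i - l) := by
          unfold sconv; congr 1; ext l; rw [ENNReal.tsum_mul_right]
      _ ≤ ∑' l, ∑' m, wt κ i * (B' m * (B' (l - m) * H' (i - l))) := by
          refine ENNReal.tsum_le_tsum fun l => ENNReal.tsum_le_tsum fun m => ?_
          have h2 : 1 ≤ wt κ i * (wt κ m * (wt κ (l - m) * wt (-κ) (i - l))) := by
            have h3 : wt κ (i - l) ≤ wt κ i * (wt κ m * wt κ (l - m)) := by
              have := (wt_submul hκ0 i (-l))
              refine (this.trans ?_)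
              rw [wt_neg_arg]
              gcongr
              simpa using wt_submul hκ0 m (l - m)
            calc 1 = wt κ (i - l) * wt (-κ) (i - l) := (wt_mul_wt_neg _ _).symm
              _ ≤ wt κ i * (wt κ m * wt κ (l - m)) * wt (-κ) (i - l) := by gcongr
              _ = _ := by ring
          calc B m * B (l - m) * H (i - l) = 1 * (B m * B (l - m) * H (i - l)) := by simp
            _ ≤ (wt κ i * (wt κ m * (wt κ (l - m) * wt (-κ) (i - l)))) *
                (B m * B (l - m) * H (i - l)) := by gcongr
            _ = _ := by simp only [B', H']; ring
      _ = _ := by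
          rw [ENNReal.tsum_comm]
          simp_rw [ENNReal.tsum_mul_left]
          congr 2; ext m
          congr 1
          unfold sconv
          rw [← tsum_shift (fun j => B' j * H' (i - m - j)) m]
          congr 1; ext l
          congr 2; ring
  have hB : ∑' m, B' m ^ 2 ≤ ∑' k, (wt b k * B k) ^ 2 := by
    refine ENNReal.tsum_le_tsum fun k => ?_
    have := wt_mono (hκ2.trans hb.le) k
    simp only [B']; gcongr
  have hB2 : ∀ k, wt (b - κ) k * B' k = wt b k * B k := by
    intro k; simp only [B']; rw [← mul_assoc, ← wt_add]; simp
  have hH2 : ∀ k, wt (1/2 - s + κ) k * H' k = wt (1/2 - s) k * H k := by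
    intro k; simp only [H']; rw [← mul_assoc, ← wt_add]; simp
  have h4 := tsum_sconv_sq_le (p := b - κ) (q := 1/2 - s + κ) (by linarith) (by linarith) B' H'
  simp_rw [hB2, hH2] at h4
  calc sconv (sconv B B) H i ^ 2 ≤ (wt κ i * ∑' m, B' m * sconv B' H' (i - m)) ^ 2 := by gcongr
    _ ≤ wt κ i ^ 2 * ((∑' m, B' m ^ 2) * ∑' m, sconv B' H' (i - m) ^ 2) := by
        rw [mul_pow]; gcongr; exact tsum_mul_sq_le _ _
    _ ≤ wt κ i ^ 2 * ((∑' k, (wt b k * B k) ^ 2) *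
        ((2 * ∑' k, wt (-(2 * ((b - κ) + (1/2 - s + κ)))) k) *
          ((∑' k, (wt b k * B k) ^ 2) * ∑' k, (wt (1/2 - s) k * H k) ^ 2))) := by
        rw [tsum_reflect (fun m => sconv B' H' m ^ 2)]
        gcongr
    _ = _ := by ring

/-- Continuous complex-valued functions on the unit circle. -/
abbrev PerC := C(AddCircle (1:ℝ), ℂ)

lemma integrable_perC (f : PerC) : Integrable f (AddCircle.haarAddCircle (T := (1:ℝ))) :=
  f.continuous.integrable_of_hasCompactSupport (HasCompactSupport.of_compactSpace f)

lemma norm_fourierCoeff_le (f : PerC) (k : ℤ) : ‖fourierCoeff f k‖ ≤ ‖f‖ := by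
  unfold fourierCoeff
  refine (norm_integral_le_of_norm_le_const (C := ‖f‖) (ae_of_all _ fun t => ?_)).trans (by simp)
  rw [norm_smul]
  have h : ‖(fourier (-k) : PerC) t‖ ≤ 1 := by
    have := (fourier (-k) : PerC).norm_coe_le_norm t
    rwa [fourier_norm] at this
  calc _ ≤ 1 * ‖f‖ := by gcongr; exact f.norm_coe_le_norm t
    _ = _ := one_mul _

/-- The `k`-th Fourier coefficient as a continuous linear functional. -/
def fourierCoeffL (k : ℤ) : PerC →L[ℂ] ℂ :=
  LinearMap.mkContinuous
    { toFun := fun f => fourierCoeff f k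
      map_add' := fun f g => by
        rw [ContinuousMap.coe_add, fourierCoeff.add (integrable_perC f) (integrable_perC g)]; rfl
      map_smul' := fun c f => by
        rw [ContinuousMap.coe_smul, fourierCoeff.const_smul]; rfl } 1
    (fun f => by simpa using norm_fourierCoeff_le f k)

@[simp] lemma fourierCoeffL_apply (k : ℤ) (f : PerC) : fourierCoeffL k f = fourierCoeff f k := rfl

/-- The Fourier coefficients of `f` are dominated by `F`. -/
def FDom (f : PerC) (F : ℤ → ℝ≥0∞) : Prop := ∀ k, ‖fourierCoeff f k‖ₑ ≤ F k

lemma fourierCoeff_fourier_mul (g : PerC) (j k : ℤ) :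
    fourierCoeff (fourier j * g : PerC) k = fourierCoeff g (k - j) := by
  unfold fourierCoeff
  congr 1; ext t
  rw [ContinuousMap.mul_apply, smul_eq_mul, smul_eq_mul, ← mul_assoc, ← fourier_add]
  congr 3; ring

lemma summable_of_tsum_enorm {a : ℤ → ℂ} (h : ∑' k, ‖a k‖ₑ ≠ ⊤) : Summable a := by
  have : Summable (fun k => ‖a k‖₊) := by
    rw [← ENNReal.tsum_coe_ne_top_iff_summable]; exact h
  exact Summable.of_nnnorm this

lemma FDom.mul {f g : PerC} {F G : ℤ → ℝ≥0∞} (hf : FDom f F) (hg : FDom g G)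
    (hF : ∑' k, ‖fourierCoeff f k‖ₑ ≠ ⊤) : FDom (f * g) (sconv F G) := by
  intro k
  have hs : Summable (fourierCoeff f) :=
    summable_of_tsum_enorm hF
  have h1 := ((hasSum_fourier_series_of_summable hs).mul_right g)
  have h2 := h1.mapL (fourierCoeffL k)
  have h3 : ∀ i, fourierCoeffL k (fourierCoeff f i • fourier i * g) =
      fourierCoeff f i * fourierCoeff g (k - i) := by
    intro i
    rw [smul_mul_assoc, map_smul, fourierCoeffL_apply, fourierCoeff_fourier_mul, smul_eq_mul]
  simp_rw [h3] at h2
  rw [fourierCoeffL_apply] at h2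
  rw [← h2.tsum_eq]
  refine enorm_tsum_le_tsum_enorm.trans (ENNReal.tsum_le_tsum fun j => ?_)
  rw [enorm_mul]
  exact mul_le_mul' (hf j) (hg _)

lemma FDom.mono {f : PerC} {F G : ℤ → ℝ≥0∞} (hf : FDom f F) (h : ∀ k, F k ≤ G k) : FDom f G :=
  fun k => (hf k).trans (h k)

lemma FDom.add {f g : PerC} {F G : ℤ → ℝ≥0∞} (hf : FDom f F) (hg : FDom g G) :
    FDom (f + g) (fun k => F k + G k) := by
  intro k
  have : fourierCoeff (f + g : PerC) k = fourierCoeff f k + fourierCoeff g k :=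
    map_add (fourierCoeffL k) f g
  rw [this]
  exact (enorm_add_le _ _).trans (add_le_add (hf k) (hg k))

lemma FDom.neg {f : PerC} {F : ℤ → ℝ≥0∞} (hf : FDom f F) : FDom (-f) F := by
  intro k
  have : fourierCoeff (-f : PerC) k = -fourierCoeff f k := map_neg (fourierCoeffL k) f
  rw [this, enorm_neg]
  exact hf k

lemma FDom.sub {f g : PerC} {F G : ℤ → ℝ≥0∞} (hf : FDom f F) (hg : FDom g G) :
    FDom (f - g) (fun k => F k + G k) := by
  rw [sub_eq_add_neg]; exact hf.add hg.neg

lemma FDom.sum {ι : Type*} (s : Finset ι) {f : ι → PerC} {F : ι → ℤ → ℝ≥0∞}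
    (hf : ∀ i ∈ s, FDom (f i) (F i)) : FDom (∑ i ∈ s, f i) (fun k => ∑ i ∈ s, F i k) := by
  intro k
  have : fourierCoeff (∑ i ∈ s, f i : PerC) k = ∑ i ∈ s, fourierCoeff (f i) k :=
    map_sum (fourierCoeffL k) f s
  rw [this]
  exact (enorm_sum_le _ _).trans (Finset.sum_le_sum fun i hi => hf i hi k)

/-- Weighted Wiener norm. -/
def wnorm (c : ℝ) (f : PerC) : ℝ≥0∞ := ∑' k, wt c k * ‖fourierCoeff f k‖ₑ

lemma FDom.self (f : PerC) : FDom f (fun k => ‖fourierCoeff f k‖ₑ) := fun _ => le_rfl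

lemma FDom.wnorm_le {f : PerC} {F : ℤ → ℝ≥0∞} (hf : FDom f F) (c : ℝ) :
    wnorm c f ≤ ∑' k, wt c k * F k :=
  ENNReal.tsum_le_tsum fun k => by gcongr; exact hf k

lemma tsum_le_tsum_wt {c : ℝ} (hc : 0 ≤ c) (F : ℤ → ℝ≥0∞) : ∑' k, F k ≤ ∑' k, wt c k * F k :=
  ENNReal.tsum_le_tsum fun k => by
    calc F k = 1 * F k := (one_mul _).symm
      _ ≤ _ := by gcongr; exact one_le_wt hc k

lemma wnorm_mul_le {c : ℝ} (hc : 0 ≤ c) {f : PerC} (hf : wnorm c f ≠ ⊤) (g : PerC) :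
    wnorm c (f * g) ≤ wnorm c f * wnorm c g := by
  have h := (FDom.self f).mul (FDom.self g)
    (ne_top_of_le_ne_top hf (tsum_le_tsum_wt hc _))
  exact (h.wnorm_le c).trans (tsum_wt_sconv_le hc _ _)

lemma enorm_le_wnorm {c : ℝ} (hc : 0 ≤ c) (f : PerC) : ‖f‖ₑ ≤ wnorm c f := by
  by_cases hf : wnorm c f = ⊤
  · rw [hf]; exact le_top
  have h0 : ∑' k, ‖fourierCoeff f k‖ₑ ≤ wnorm c f := tsum_le_tsum_wt hc _
  have hs : Summable (fourierCoeff f) := summable_of_tsum_enorm (ne_top_of_le_ne_top hf h0)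
  refine le_trans ?_ h0
  conv_lhs => rw [← (hasSum_fourier_series_of_summable hs).tsum_eq]
  refine (enorm_tsum_le_tsum_enorm (ι := ℤ) (ε := PerC)).trans (le_of_eq ?_)
  congr 1; ext k
  rw [enorm_smul]
  have : ‖(fourier k : PerC)‖ₑ = 1 := by rw [← ofReal_norm, fourier_norm]; simp
  rw [this, mul_one]

lemma fourierCoeff_one (k : ℤ) : fourierCoeff (1 : PerC) k = if k = 0 then 1 else 0 := by
  have h : ((1 : PerC) : AddCircle (1:ℝ) → ℂ) = fourier 0 := by ext t; simp
  rw [h, fourierCoeff_fourier, Pi.single_apply]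

lemma wnorm_one (c : ℝ) : wnorm c 1 = 1 := by
  unfold wnorm
  rw [tsum_eq_single 0]
  · rw [fourierCoeff_one]; simp [wt]
  · intro k hk; rw [fourierCoeff_one, if_neg hk]; simp

lemma wnorm_pow_le {c : ℝ} (hc : 0 ≤ c) {f : PerC} (hf : wnorm c f ≠ ⊤) (m : ℕ) :
    wnorm c (f ^ m) ≤ wnorm c f ^ m := by
  induction m with
  | zero => simp [wnorm_one]
  | succ m ih =>
    rw [pow_succ', pow_succ']
    exact (wnorm_mul_le hc hf _).trans (by gcongr)

lemma wnorm_sum_le {ι : Type*} (c : ℝ) (s : Finset ι) (f : ι → PerC) :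
    wnorm c (∑ i ∈ s, f i) ≤ ∑ i ∈ s, wnorm c (f i) := by
  refine ((FDom.sum s fun i _ => FDom.self (f i)).wnorm_le c).trans (le_of_eq ?_)
  simp_rw [Finset.mul_sum]
  rw [Summable.tsum_finsetSum (fun _ _ => ENNReal.summable)]; rfl

lemma fourierCoeff_mul_eq_zero {f g : PerC} {M N : ℕ} (hf : ∀ k : ℤ, M < k.natAbs →
    fourierCoeff f k = 0) (hg : ∀ k : ℤ, N < k.natAbs → fourierCoeff g k = 0) (k : ℤ)
    (hk : M + N < k.natAbs) : fourierCoeff (f * g : PerC) k = 0 := by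
  have hF : ∑' k, ‖fourierCoeff f k‖ₑ ≠ ⊤ := by
    rw [tsum_eq_sum (s := Finset.Icc (-(M:ℤ)) M)]
    · exact ENNReal.sum_ne_top.2 fun _ _ => enorm_ne_top
    · intro k hk
      rw [hf k (by simp at hk; omega), enorm_zero]
  have h := (FDom.self f).mul (FDom.self g) hF k
  have h0 : sconv (fun k => ‖fourierCoeff f k‖ₑ) (fun k => ‖fourierCoeff g k‖ₑ) k = 0 := by
    unfold sconv
    rw [ENNReal.tsum_eq_zero]
    intro j
    by_cases hj : M < j.natAbs
    · simp [hf j hj]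
    · have : N < (k - j).natAbs := by omega
      simp [hg _ this]
  rw [h0] at h
  simpa using h

lemma fourierCoeff_pow_eq_zero {f : PerC} {N : ℕ} (hf : ∀ k : ℤ, N < k.natAbs →
    fourierCoeff f k = 0) (j : ℕ) (k : ℤ) (hk : j * N < k.natAbs) :
    fourierCoeff (f ^ j : PerC) k = 0 := by
  induction j generalizing k with
  | zero =>
    rw [pow_zero, fourierCoeff_one, if_neg]
    rintro rfl; simp at hk
  | succ j ih =>
    rw [pow_succ]
    exact fourierCoeff_mul_eq_zero ih hf k (by rwa [← Nat.succ_mul])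

lemma wnorm_le_of_band {c : ℝ} (hc : 0 ≤ c) {f : PerC} {M : ℕ} (hf : ∀ k : ℤ, M < k.natAbs →
    fourierCoeff f k = 0) : wnorm c f ≤ (2 * M + 1) * (1 + M) ^ c * ‖f‖ₑ := by
  unfold wnorm
  rw [tsum_eq_sum (s := Finset.Icc (-(M:ℤ)) M)]
  · calc _ ≤ ∑ k ∈ Finset.Icc (-(M:ℤ)) M, (1 + (M:ℝ≥0∞)) ^ c * ‖f‖ₑ := by
          refine Finset.sum_le_sum fun k hk => ?_
          gcongr
          · unfold wt
            refine ENNReal.rpow_le_rpow ?_ hc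
            gcongr
            simp at hk; omega
          · rw [← ofReal_norm, ← ofReal_norm]
            exact ENNReal.ofReal_le_ofReal (norm_fourierCoeff_le f k)
      _ = _ := by
          rw [Finset.sum_const, nsmul_eq_mul, mul_assoc]
          congr 1
          rw [Int.card_Icc]
          have : ((M:ℤ) + 1 - -M).toNat = 2 * M + 1 := by omega
          rw [this]; push_cast; ring
  · intro k hk
    rw [hf k (by simp at hk; omega)]; simp

lemma exists_poly_geom_bound (c : ℝ) (N : ℕ) {q R : ℝ} (hq : 0 < q) (hqR : q < R) :
    ∃ C : ℝ≥0∞, C ≠ ⊤ ∧ ∀ m : ℕ, (2 * (m * N : ℕ) + 1) * (1 + ((m * N : ℕ) : ℝ≥0∞)) ^ c *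
      ENNReal.ofReal q ^ m ≤ C * ENNReal.ofReal R ^ m := by
  have hR : 0 < R := hq.trans hqR
  obtain ⟨K, hK⟩ := exists_nat_ge c
  have ht := tendsto_pow_const_mul_const_pow_of_abs_lt_one (K + 1) (r := q / R)
    (by rw [abs_of_pos (by positivity), div_lt_one hR]; exact hqR)
  obtain ⟨D, hD⟩ := ht.bddAbove_range
  refine ⟨ENNReal.ofReal (2 * (N + 1) ^ (K + 1) * D * (R / q)), ENNReal.ofReal_ne_top, fun m => ?_⟩
  have h1 : ((2 * (m * N : ℕ) + 1) * (1 + ((m * N : ℕ) : ℝ≥0∞)) ^ c : ℝ≥0∞) ≤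
      ENNReal.ofReal (2 * (N + 1) ^ (K + 1) * (m + 1 : ℕ) ^ (K + 1)) := by
    calc ((2 * (m * N : ℕ) + 1) * (1 + ((m * N : ℕ) : ℝ≥0∞)) ^ c : ℝ≥0∞)
        ≤ (2 * (1 + (m * N : ℕ))) * (1 + ((m * N : ℕ) : ℝ≥0∞)) ^ (K : ℝ) := by
          gcongr ?_ * ?_
          · rw [mul_add, mul_one, add_comm]; gcongr; norm_num
          · exact ENNReal.rpow_le_rpow_of_exponent_le (by simp) hK
      _ = ENNReal.ofReal (2 * (1 + (m * N : ℕ)) ^ (K + 1)) := by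
          rw [ENNReal.rpow_natCast, mul_assoc, ← pow_succ', ENNReal.ofReal_mul (by norm_num),
            ENNReal.ofReal_pow (by positivity), ENNReal.ofReal_add (by norm_num) (by positivity)]
          simp only [ENNReal.ofReal_natCast]; simp
      _ ≤ _ := by
          apply ENNReal.ofReal_le_ofReal
          rw [mul_assoc, ← mul_pow]
          gcongr
          push_cast
          nlinarith [(Nat.cast_nonneg m : (0:ℝ) ≤ m), (Nat.cast_nonneg N : (0:ℝ) ≤ N)]
  refine (mul_le_mul_left h1 _).trans ?_
  rw [← ENNReal.ofReal_pow hq.le, ← ENNReal.ofReal_pow hR.le, ← ENNReal.ofReal_mul (by positivity),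
    ← ENNReal.ofReal_mul' (by positivity)]
  apply ENNReal.ofReal_le_ofReal
  have h2 : ((m + 1 : ℕ) : ℝ) ^ (K + 1) * (q / R) ^ (m + 1) ≤ D := hD ⟨m + 1, rfl⟩
  have h3 : (q:ℝ) ^ m = (q / R) ^ (m + 1) * (R / q) * R ^ m := by
    rw [div_pow]; field_simp; ring
  calc 2 * (N + 1) ^ (K + 1) * ((m + 1 : ℕ) : ℝ) ^ (K + 1) * q ^ m
      = 2 * (N + 1) ^ (K + 1) * (((m + 1 : ℕ) : ℝ) ^ (K + 1) * (q / R) ^ (m + 1)) * (R / q) * R ^ m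
        := by rw [h3]; ring
    _ ≤ 2 * (N + 1) ^ (K + 1) * D * (R / q) * R ^ m := by gcongr

/-- Powers of functions with sup norm at most `r` grow at most like `R ^ m`, `r < R`, in the
weighted Wiener algebra, uniformly over functions with a common summable majorant. -/
lemma exists_wnorm_pow_bound {c : ℝ} (hc : 0 ≤ c) {X : ℤ → ℝ≥0∞}
    (hX : ∑' k, wt c k * X k ≠ ⊤) {r R : ℝ} (hr : 0 ≤ r) (hR : r < R) :
    ∃ C : ℝ≥0∞, C ≠ ⊤ ∧ ∀ x : PerC, ‖x‖ ≤ r → FDom x X →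
      ∀ m : ℕ, wnorm c (x ^ m) ≤ C * ENNReal.ofReal R ^ m := by
  set η : ℝ := (R - r) / 4 with hη
  have hη0 : 0 < η := by rw [hη]; linarith
  have htail := ENNReal.tendsto_tsum_compl_atTop_zero hX
  obtain ⟨s, hs⟩ := ((tendsto_order.1 htail).2 (ENNReal.ofReal η) (by simpa using hη0)).exists
  obtain ⟨N, hN⟩ : ∃ N : ℕ, ∀ k ∈ s, k.natAbs ≤ N :=
    ⟨s.sup Int.natAbs, fun k hk => Finset.le_sup (f := Int.natAbs) hk⟩
  obtain ⟨C, hC, hCm⟩ := exists_poly_geom_bound c N (q := r + 2 * η) (R := R)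
    (by linarith) (by rw [hη]; linarith)
  refine ⟨C, hC, fun x hx hxX m => ?_⟩
  set p : PerC := ∑ k ∈ s, fourierCoeff x k • (fourier k : PerC) with hp
  have hpc : ∀ k, fourierCoeff p k = if k ∈ s then fourierCoeff x k else 0 := by
    intro k
    have h1 : fourierCoeff p k = ∑ i ∈ s, fourierCoeff x i • fourierCoeff (fourier i : PerC) k := by
      rw [← fourierCoeffL_apply, hp, map_sum]
      simp only [map_smul, fourierCoeffL_apply]
    rw [h1]
    simp only [fourierCoeff_fourier, Pi.single_apply, smul_eq_mul, mul_ite, mul_one, mul_zero]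
    rw [Finset.sum_ite_eq]
  set e : PerC := x - p with he
  have hec : ∀ k, fourierCoeff e k = if k ∈ s then 0 else fourierCoeff x k := by
    intro k
    have : fourierCoeff e k = fourierCoeff x k - fourierCoeff p k := map_sub (fourierCoeffL k) x p
    rw [this, hpc]; split_ifs <;> simp
  have hen : wnorm c e ≤ ENNReal.ofReal η := by
    refine le_trans ?_ hs.le
    refine le_trans ?_ (tsum_subtype {k | k ∉ s} (fun k => wt c k * X k)).ge
    refine ENNReal.tsum_le_tsum fun k => ?_
    rw [hec]
    by_cases hk : k ∈ s
    · simp [hk]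
    · simp only [hk, if_false, mem_ofPred_eq, not_false_eq_true, indicator_of_mem]
      gcongr; exact hxX k
  have hep : ‖e‖ ≤ η := by
    have := (enorm_le_wnorm hc e).trans hen
    rwa [← ofReal_norm, ENNReal.ofReal_le_ofReal_iff hη0.le] at this
  have hpn : ‖p‖ ≤ r + η := by
    have : p = x - e := by rw [he]; abel
    rw [this]
    exact (norm_sub_le _ _).trans (add_le_add hx hep)
  have hband : ∀ k : ℤ, N < k.natAbs → fourierCoeff p k = 0 := by
    intro k hk
    rw [hpc, if_neg]
    intro h; have := hN k h; omega
  set P : ℝ≥0∞ := (2 * (m * N : ℕ) + 1) * (1 + ((m * N : ℕ) : ℝ≥0∞)) ^ c with hP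
  have hpj : ∀ j ≤ m, wnorm c (p ^ j) ≤ P * ENNReal.ofReal (r + η) ^ j := by
    intro j hj
    have h1 : ∀ k : ℤ, m * N < k.natAbs → fourierCoeff (p ^ j : PerC) k = 0 := fun k hk =>
      fourierCoeff_pow_eq_zero hband j k (lt_of_le_of_lt (Nat.mul_le_mul_right N hj) hk)
    refine (wnorm_le_of_band hc h1).trans ?_
    gcongr
    rw [← ENNReal.ofReal_pow (by positivity), ← ofReal_norm]
    apply ENNReal.ofReal_le_ofReal
    exact (norm_pow_le p j).trans (by gcongr)
  have hej : ∀ j, wnorm c (e ^ j) ≤ ENNReal.ofReal η ^ j := by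
    intro j
    refine (wnorm_pow_le hc (ne_top_of_le_ne_top ENNReal.ofReal_ne_top hen) j).trans ?_
    gcongr
  have hpt : ∀ j ≤ m, wnorm c (p ^ j) ≠ ⊤ := by
    intro j hj
    refine ne_top_of_le_ne_top ?_ (hpj j hj)
    have : (1 + ((m * N : ℕ) : ℝ≥0∞)) ^ c ≠ ⊤ := by
      apply ENNReal.rpow_ne_top_of_nonneg hc; finiteness
    finiteness
  have hx' : x ^ m = ∑ j ∈ Finset.range (m + 1), (m.choose j) • (p ^ j * e ^ (m - j)) := by
    have : x = p + e := by rw [he]; abel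
    rw [this, add_pow]
    refine Finset.sum_congr rfl fun j _ => ?_
    rw [nsmul_eq_mul, mul_comm]
  have hns : ∀ (a : ℕ) (f : PerC), wnorm c (a • f) ≤ a * wnorm c f := by
    intro a f
    have := wnorm_sum_le c (Finset.range a) (fun _ => f)
    simpa using this
  calc wnorm c (x ^ m) ≤ ∑ j ∈ Finset.range (m + 1), (m.choose j : ℝ≥0∞) *
        ((P * ENNReal.ofReal (r + η) ^ j) * ENNReal.ofReal η ^ (m - j)) := by
        rw [hx']
        refine (wnorm_sum_le _ _ _).trans (Finset.sum_le_sum fun j hj => ?_)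
        have hj' : j ≤ m := by simpa [Nat.lt_succ_iff] using hj
        refine (hns _ _).trans ?_
        gcongr
        exact (wnorm_mul_le hc (hpt j hj') _).trans (mul_le_mul' (hpj j hj') (hej _))
    _ = P * ENNReal.ofReal (r + 2 * η) ^ m := by
        have : r + 2 * η = (r + η) + η := by ring
        rw [this, ENNReal.ofReal_add (p := r + η) (by positivity) hη0.le, add_pow, Finset.mul_sum]
        refine Finset.sum_congr rfl fun j _ => by ring
    _ ≤ _ := hCm m

/-- The coefficients of the power series of `(1 - x)^(-β)` at the origin. -/
def negBinom (β : ℝ) (n : ℕ) : ℝ := Ring.choose (β + n - 1) n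

lemma hasSum_negBinom (β : ℝ) {x : ℝ} (h0 : 0 ≤ x) (h1 : x < 1) :
    HasSum (fun n => negBinom β n * x ^ n) (1 / (1 - x) ^ β) := by
  have h := (Real.one_div_one_sub_rpow_hasFPowerSeriesOnBall_zero β).hasSum (y := x)
    (by
      rw [Metric.mem_eball, edist_zero_right, ← ofReal_norm, Real.norm_of_nonneg h0]
      rw [← ENNReal.ofReal_one]
      exact (ENNReal.ofReal_lt_ofReal_iff one_pos).2 h1)
  simpa [FormalMultilinearSeries.ofScalars_apply_eq, negBinom, mul_comm] using h

lemma negBinom_zero (β : ℝ) : negBinom β 0 = 1 := by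
  simp [negBinom]

lemma hasSum_negBinom_succ (β : ℝ) {x : ℝ} (h0 : 0 ≤ x) (h1 : x < 1) :
    HasSum (fun n => negBinom β (n + 1) * x ^ (n + 1)) (1 / (1 - x) ^ β - 1) := by
  have h := (hasSum_nat_add_iff' 1).2 (hasSum_negBinom β h0 h1)
  simpa [negBinom_zero] using h

lemma summable_negBinom_succ (β : ℝ) {R : ℝ} (h0 : 0 < R) (h1 : R < 1) :
    Summable (fun n => |negBinom β (n + 1)| * R ^ n) := by
  have h := ((hasSum_negBinom_succ β h0.le h1).summable.abs).mul_right R⁻¹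
  refine h.congr fun n => ?_
  rw [abs_mul, abs_of_pos (pow_pos h0 _), pow_succ]
  field_simp

lemma le_of_sq_le_sq_ennreal {a b : ℝ≥0∞} (h : a ^ 2 ≤ b ^ 2) : a ≤ b :=
  (ENNReal.pow_le_pow_left_iff two_ne_zero).1 h

/-- The weighted `ℓ²` norm of order `c`. -/
def l2norm (c : ℝ) (F : ℤ → ℝ≥0∞) : ℝ≥0∞ := (∑' k, (wt c k * F k) ^ 2) ^ (1/2 : ℝ)

lemma l2norm_sq (c : ℝ) (F : ℤ → ℝ≥0∞) : l2norm c F ^ 2 = ∑' k, (wt c k * F k) ^ 2 := by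
  unfold l2norm
  rw [← ENNReal.rpow_two, ← ENNReal.rpow_mul]; norm_num

lemma exists_pairing_bound {s b : ℝ} (hs : 0 < s) (hb : s < b) :
    ∃ K : ℝ≥0∞, K ≠ ⊤ ∧ ∀ (x y g : PerC) (B H : ℤ → ℝ≥0∞) (δ : ℝ≥0∞),
      FDom x (fun k => δ * sconv B B k) → FDom y H → ∑' k, ‖fourierCoeff x k‖ₑ ≠ ⊤ →
      wnorm (max 0 (s - 1/2)) g ≠ ⊤ →
      ‖fourierCoeff (g * (x * y) : PerC) 0‖ₑ ≤
        K * (δ * l2norm b B ^ 2 * l2norm (1/2 - s) H) * wnorm (max 0 (s - 1/2)) g := by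
  obtain ⟨K, hK, hKb⟩ := exists_trilinear_bound hs hb
  set κ := max 0 (s - 1/2) with hκ
  have hκ0 : 0 ≤ κ := le_max_left _ _
  refine ⟨K ^ (1/2:ℝ), ENNReal.rpow_ne_top_of_nonneg (by norm_num) hK,
    fun x y g B H δ hx hy hxs hg => ?_⟩
  have h1 : FDom (x * y) (sconv (fun k => δ * sconv B B k) H) := hx.mul hy hxs
  have h2 : ∀ i, sconv (fun k => δ * sconv B B k) H i ≤
      K ^ (1/2:ℝ) * (δ * l2norm b B ^ 2 * l2norm (1/2 - s) H) * wt κ i := by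
    intro i
    have e : sconv (fun k => δ * sconv B B k) H i = δ * sconv (sconv B B) H i := by
      unfold sconv; rw [← ENNReal.tsum_mul_left]; simp_rw [mul_assoc]
    have h3 : sconv (sconv B B) H i ≤
        K ^ (1/2:ℝ) * wt κ i * (l2norm b B ^ 2 * l2norm (1/2 - s) H) := by
      apply le_of_sq_le_sq_ennreal
      refine (hKb B H i).trans (le_of_eq ?_)
      have : (K ^ (1/2:ℝ)) ^ 2 = K := by
        rw [← ENNReal.rpow_two, ← ENNReal.rpow_mul]; norm_num
      rw [mul_pow, mul_pow, mul_pow, this, l2norm_sq, l2norm_sq]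
    rw [e]
    calc _ ≤ δ * (K ^ (1/2:ℝ) * wt κ i * (l2norm b B ^ 2 * l2norm (1/2 - s) H)) := by gcongr
      _ = _ := by ring
  have h4 := (FDom.self g).mul h1 (ne_top_of_le_ne_top hg (tsum_le_tsum_wt hκ0 _)) 0
  refine h4.trans ?_
  unfold sconv wnorm
  rw [← ENNReal.tsum_mul_left]
  refine ENNReal.tsum_le_tsum fun j => ?_
  calc _ ≤ ‖fourierCoeff g j‖ₑ * (K ^ (1/2:ℝ) * (δ * l2norm b B ^ 2 * l2norm (1/2 - s) H) *
        wt κ (0 - j)) := by gcongr; exact h2 _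
    _ = _ := by rw [zero_sub, wt_neg_arg]; ring

/-- The basic estimate for the functional
`y ↦ ∫ y z ((1 - x)^(-β) - 1)`. -/
lemma exists_negPow_pairing_bound (β : ℝ) {s b r : ℝ} (hs : 0 < s) (hb : s < b) (hr : 0 ≤ r)
    (hr1 : r < 1) {X : ℤ → ℝ≥0∞} (hX : ∑' k, wt (max 0 (s - 1/2)) k * X k ≠ ⊤) :
    ∃ C : ℝ≥0∞, C ≠ ⊤ ∧ ∀ (x y z φ : PerC) (B H : ℤ → ℝ≥0∞) (δ : ℝ≥0∞), FDom x X →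
      (∀ t, ∃ ξ : ℝ, 0 ≤ ξ ∧ ξ ≤ r ∧ x t = ξ ∧ φ t = ((1 / (1 - ξ) ^ β - 1 : ℝ) : ℂ)) →
      FDom x (fun k => δ * sconv B B k) → FDom y H → wnorm (max 0 (s - 1/2)) z ≠ ⊤ →
      ‖fourierCoeff (y * z * φ : PerC) 0‖ₑ ≤
        C * (δ * l2norm b B ^ 2 * l2norm (1/2 - s) H) * wnorm (max 0 (s - 1/2)) z := by
  obtain ⟨K, hK, hKb⟩ := exists_pairing_bound hs hb
  set κ := max 0 (s - 1/2) with hκ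
  have hκ0 : 0 ≤ κ := le_max_left _ _
  obtain ⟨R, hrR, hR1⟩ := exists_between hr1
  have hR0 : 0 < R := hr.trans_lt hrR
  obtain ⟨C₁, hC₁, hC₁b⟩ := exists_wnorm_pow_bound hκ0 hX hr hrR
  have hsum := summable_negBinom_succ β hR0 hR1
  set S : ℝ≥0∞ := ∑' n : ℕ, ENNReal.ofReal (|negBinom β (n + 1)| * R ^ n) with hS
  have hSt : S ≠ ⊤ := hsum.tsum_ofReal_ne_top
  refine ⟨K * C₁ * S, by finiteness, fun x y z φ B H δ hxX hφ hx hy hz => ?_⟩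
  have hxr : ‖x‖ ≤ r := by
    rw [ContinuousMap.norm_le _ hr]
    intro t
    obtain ⟨ξ, h0, h1, h2, -⟩ := hφ t
    rw [h2, Complex.norm_real, Real.norm_of_nonneg h0]; exact h1
  have hxw : ∑' k, ‖fourierCoeff x k‖ₑ ≠ ⊤ :=
    ne_top_of_le_ne_top hX ((tsum_le_tsum_wt hκ0 _).trans (hxX.wnorm_le κ))
  set a : ℕ → PerC := fun n => (negBinom β (n + 1) : ℂ) • x ^ (n + 1) with ha
  have hasum : Summable a := by
    refine Summable.of_norm_bounded (hsum.mul_right R) fun n => ?_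
    rw [ha, norm_smul, Complex.norm_real, Real.norm_eq_abs, mul_assoc, ← pow_succ]
    gcongr
    exact (norm_pow_le x _).trans (by gcongr; exact hxr.trans hrR.le)
  have hafun : HasSum a φ := by
    convert hasum.hasSum
    ext t
    obtain ⟨ξ, h0, h1, h2, h3⟩ := hφ t
    have h4 := hasum.hasSum.mapL (ContinuousMap.evalCLM ℂ t)
    simp only [ContinuousMap.evalCLM_apply] at h4
    rw [h3]
    refine HasSum.unique ?_ h4
    have h5 := (hasSum_negBinom_succ β h0 (h1.trans_lt hr1)).mapL Complex.ofRealCLM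
    simpa [ha, h2] using h5
  have h6 := ((hafun.mul_left (y * z)).mapL (fourierCoeffL 0))
  rw [← fourierCoeffL_apply, ← h6.tsum_eq]
  refine (enorm_tsum_le_tsum_enorm).trans ?_
  have h7 : ∀ n, ‖fourierCoeffL 0 (y * z * a n)‖ₑ ≤
      (K * C₁ * (δ * l2norm b B ^ 2 * l2norm (1/2 - s) H) * wnorm κ z) *
        ENNReal.ofReal (|negBinom β (n + 1)| * R ^ n) := by
    intro n
    have e : y * z * a n = (negBinom β (n + 1) : ℂ) • ((z * x ^ n) * (x * y)) := by
      rw [ha, mul_smul_comm]; congr 1; ring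
    have hzx := wnorm_mul_le hκ0 hz (x ^ n)
    have hxn := hC₁b x hxr hxX n
    have hxn' : wnorm κ (x ^ n) ≠ ⊤ := ne_top_of_le_ne_top (by finiteness) hxn
    have hzx' : wnorm κ (z * x ^ n) ≠ ⊤ := ne_top_of_le_ne_top (by finiteness) hzx
    rw [e, map_smul, enorm_smul, fourierCoeffL_apply]
    have h8 := hKb x y (z * x ^ n) B H δ hx hy hxw hzx'
    have h9 : ‖(negBinom β (n + 1) : ℂ)‖ₑ = ENNReal.ofReal |negBinom β (n + 1)| := by
      rw [← ofReal_norm, Complex.norm_real, Real.norm_eq_abs]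
    rw [h9, ENNReal.ofReal_mul (abs_nonneg _), ENNReal.ofReal_pow hR0.le]
    calc _ ≤ ENNReal.ofReal |negBinom β (n + 1)| *
          (K * (δ * l2norm b B ^ 2 * l2norm (1/2 - s) H) *
            (wnorm κ z * (C₁ * ENNReal.ofReal R ^ n))) := by
          gcongr
          exact h8.trans (by gcongr; exact hzx.trans (by gcongr))
      _ = _ := by ring
  refine (ENNReal.tsum_le_tsum h7).trans (le_of_eq ?_)
  rw [ENNReal.tsum_mul_left]; ring

/-- The continuous function on the circle induced by a continuous `1`-periodic real function. -/
def perLift (g : ℝ → ℝ) (hp : Function.Periodic g 1) (hc : Continuous g) : PerC :=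
  ⟨fun x => (hp.lift x : ℂ), Complex.continuous_ofReal.comp
    (continuous_coinduced_dom.2 hc)⟩

@[simp] lemma perLift_coe {g : ℝ → ℝ} (hp : Function.Periodic g 1) (hc : Continuous g) (u : ℝ) :
    perLift g hp hc (u : AddCircle (1:ℝ)) = (g u : ℂ) := by
  change ((hp.lift (u : AddCircle (1:ℝ)) : ℝ) : ℂ) = _
  rw [Function.Periodic.lift_coe]

lemma perC_ext {f g : PerC} (h : ∀ u : ℝ, f (u : AddCircle (1:ℝ)) = g (u : AddCircle (1:ℝ))) :
    f = g := by
  ext x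
  induction x using QuotientAddGroup.induction_on with
  | H u => exact h u

lemma fourierCoeff_perC (f : PerC) (k : ℤ) : fourierCoeff f k =
    ∫ u in (0:ℝ)..1, f (u : AddCircle (1:ℝ)) *
      Complex.exp ((-2) * (Real.pi : ℂ) * Complex.I * (k : ℂ) * (u : ℂ)) := by
  rw [fourierCoeff_eq_intervalIntegral _ _ 0]
  simp only [zero_add, div_one, one_smul]
  refine intervalIntegral.integral_congr fun u _ => ?_
  simp only [smul_eq_mul, fourier_coe_apply]
  rw [mul_comm]
  congr 2
  push_cast; ring

lemma fourierCoeff_perC_zero (f : PerC) : fourierCoeff f 0 =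
    ∫ u in (0:ℝ)..1, f (u : AddCircle (1:ℝ)) := by
  rw [fourierCoeff_perC]; simp

/-- Translation of periodic functions. -/
def transl (t : ℝ) (f : PerC) : PerC :=
  f.comp ⟨fun x => x + (t : AddCircle (1:ℝ)), by fun_prop⟩

lemma transl_coe (t : ℝ) (f : PerC) (u : ℝ) :
    transl t f (u : AddCircle (1:ℝ)) = f ((u + t : ℝ) : AddCircle (1:ℝ)) := by
  simp [transl]

lemma continuous_transl (f : PerC) : Continuous (fun t : ℝ => transl t f) :=
  (ContinuousMap.curry ⟨fun p : ℝ × AddCircle (1:ℝ) => f (p.2 + (p.1 : AddCircle (1:ℝ))), by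
    have : Continuous (fun t : ℝ => (t : AddCircle (1:ℝ))) := AddCircle.continuous_mk' 1
    fun_prop⟩).continuous

lemma fourierCoeff_transl (t : ℝ) (f : PerC) (k : ℤ) :
    fourierCoeff (transl t f) k = fourier k (t : AddCircle (1:ℝ)) * fourierCoeff f k := by
  unfold fourierCoeff
  rw [← integral_add_right_eq_self (fun x : AddCircle (1:ℝ) => fourier (-k) x • f x)
    (t : AddCircle (1:ℝ)), ← integral_const_mul]
  congr 1; ext x
  simp only [smul_eq_mul]
  have e' : (fourier (-k) (x + (t : AddCircle (1:ℝ))) : ℂ) =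
      fourier (-k) x * fourier (-k) (t : AddCircle (1:ℝ)) := by
    simp only [fourier_apply, smul_add, AddCircle.toCircle_add, Circle.coe_mul]
  have : fourier k (t : AddCircle (1:ℝ)) * fourier (-k) (t : AddCircle (1:ℝ)) = 1 := by
    rw [← fourier_add]; simp
  have e : transl t f x = f (x + (t : AddCircle (1:ℝ))) := rfl
  rw [e, e']
  linear_combination (fourier (-k) x * f (x + (t : AddCircle (1:ℝ)))) * (-this)

/-- The average of the translates of `f` by `t * w`, `t ∈ [0,1]`. -/
def segAvg (w : ℝ) (f : PerC) : PerC := ∫ t in (0:ℝ)..1, transl (t * w) f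

lemma perC_integral_apply {p : ℝ → PerC} (hp : Continuous p) (x : AddCircle (1:ℝ)) :
    (∫ t in (0:ℝ)..1, p t) x = ∫ t in (0:ℝ)..1, p t x :=
  ((ContinuousMap.evalCLM ℂ x).intervalIntegral_comp_comm (hp.intervalIntegrable _ _)).symm

lemma FDom.integral {p : ℝ → PerC} (hp : Continuous p) {E : ℤ → ℝ≥0∞}
    (h : ∀ t ∈ Icc (0:ℝ) 1, FDom (p t) E) : FDom (∫ t in (0:ℝ)..1, p t) E := by
  intro k
  have h1 : fourierCoeff (∫ t in (0:ℝ)..1, p t : PerC) k = ∫ t in (0:ℝ)..1, fourierCoeff (p t) k :=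
    ((fourierCoeffL k).intervalIntegral_comp_comm (hp.intervalIntegrable _ _)).symm
  rw [h1]
  by_cases hE : E k = ⊤
  · rw [hE]; exact le_top
  have h2 : ‖∫ t in (0:ℝ)..1, fourierCoeff (p t) k‖ ≤ (E k).toReal * |1 - 0| := by
    refine intervalIntegral.norm_integral_le_of_norm_le_const fun t ht => ?_
    rw [uIoc_of_le zero_le_one] at ht
    rw [← toReal_enorm]
    exact ENNReal.toReal_mono hE (h t ⟨ht.1.le, ht.2⟩ k)
  rw [← ofReal_norm]
  calc _ ≤ ENNReal.ofReal ((E k).toReal) := ENNReal.ofReal_le_ofReal (by simpa using h2)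
    _ = E k := ENNReal.ofReal_toReal hE

lemma continuous_transl_mul (w : ℝ) (f : PerC) : Continuous (fun t : ℝ => transl (t * w) f) :=
  (continuous_transl f).comp (by fun_prop)

lemma FDom.translate {f : PerC} {E : ℤ → ℝ≥0∞} (h : FDom f E) (t : ℝ) : FDom (transl t f) E := by
  intro k
  rw [fourierCoeff_transl, enorm_mul]
  have : ‖(fourier k (t : AddCircle (1:ℝ)) : ℂ)‖ₑ = 1 := by
    rw [← ofReal_norm, fourier_apply, Circle.norm_coe, ENNReal.ofReal_one]
  rw [this, one_mul]; exact h k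

lemma FDom.avg {f : PerC} {E : ℤ → ℝ≥0∞} (h : FDom f E) (w : ℝ) : FDom (segAvg w f) E :=
  FDom.integral (continuous_transl_mul w f) fun _ _ => h.translate _

/-- `F` is the derivative of `G`. -/
def PerDeriv (G F : PerC) : Prop :=
  ∀ u : ℝ, HasDerivAt (fun v : ℝ => G (v : AddCircle (1:ℝ))) (F (u : AddCircle (1:ℝ))) u

lemma PerDeriv.mul_segAvg {G F : PerC} (h : PerDeriv G F) (w u : ℝ) :
    (w : ℂ) * segAvg w F (u : AddCircle (1:ℝ)) =
      G ((u + w : ℝ) : AddCircle (1:ℝ)) - G (u : AddCircle (1:ℝ)) := by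
  unfold segAvg
  rw [perC_integral_apply (continuous_transl_mul w F), ← intervalIntegral.integral_const_mul]
  have h1 : ∀ t ∈ uIcc (0:ℝ) 1, HasDerivAt (fun t : ℝ => G ((u + t * w : ℝ) : AddCircle (1:ℝ)))
      ((w : ℂ) * transl (t * w) F (u : AddCircle (1:ℝ))) t := by
    intro t _
    rw [transl_coe]
    have := HasDerivAt.scomp t (h (u + t * w)) (((hasDerivAt_id t).mul_const w).const_add u)
    simpa [Function.comp_def] using this
  rw [intervalIntegral.integral_eq_sub_of_hasDerivAt h1]
  · simp
  · refine Continuous.intervalIntegrable ?_ _ _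
    exact continuous_const.mul (((ContinuousMap.evalCLM ℂ (u : AddCircle (1:ℝ))).continuous).comp
      (continuous_transl_mul w F))

lemma PerDeriv.fourierCoeff_eq {G F : PerC} (h : PerDeriv G F) (k : ℤ) :
    fourierCoeff F k = 2 * Real.pi * Complex.I * k * fourierCoeff G k := by
  rw [fourierCoeff_perC, fourierCoeff_perC]
  set c : ℂ := (-2) * (Real.pi : ℂ) * Complex.I * (k : ℂ) with hc
  have hcont : ∀ f : PerC, Continuous (fun u : ℝ => f (u : AddCircle (1:ℝ))) := fun f =>
    f.continuous.comp (AddCircle.continuous_mk' 1)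
  have he : ∀ u : ℝ, HasDerivAt (fun u : ℝ => Complex.exp (c * u)) (Complex.exp (c * u) * c) u := by
    intro u
    have : HasDerivAt (fun u : ℝ => c * (u : ℂ)) c u := by
      simpa using (Complex.ofRealCLM.hasDerivAt (x := u)).const_mul c
    exact this.cexp
  have h1 := intervalIntegral.integral_deriv_mul_eq_sub (a := 0) (b := 1)
    (u := fun u : ℝ => G (u : AddCircle (1:ℝ))) (v := fun u : ℝ => Complex.exp (c * u))
    (fun u _ => h u) (fun u _ => he u) ((hcont F).intervalIntegrable _ _)
    (Continuous.intervalIntegrable (by fun_prop) _ _)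
  have h2 : G ((1:ℝ) : AddCircle (1:ℝ)) = G ((0:ℝ) : AddCircle (1:ℝ)) := by
    congr 1; simp
  have h3 : Complex.exp (c * (1:ℝ)) = 1 := by
    rw [Complex.exp_eq_one_iff]
    exact ⟨-k, by rw [hc]; push_cast; ring⟩
  rw [intervalIntegral.integral_add] at h1
  · have h4 : ∫ u in (0:ℝ)..1, G (u : AddCircle (1:ℝ)) * (Complex.exp (c * u) * c) =
        c * ∫ u in (0:ℝ)..1, G (u : AddCircle (1:ℝ)) * Complex.exp (c * u) := by
      rw [← intervalIntegral.integral_const_mul]; congr 1; ext u; ring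
    rw [h4, h2, h3] at h1
    simp only [Complex.ofReal_zero, mul_zero, Complex.exp_zero, sub_self] at h1
    rw [hc] at h1 ⊢
    linear_combination h1
  · exact Continuous.intervalIntegrable ((hcont F).mul (by fun_prop)) _ _
  · exact Continuous.intervalIntegrable ((hcont G).mul (by fun_prop)) _ _

lemma enorm_fourierCoeff_sub_transl_le (f : PerC) (t : ℝ) (k : ℤ) :
    ‖fourierCoeff (f - transl t f : PerC) k‖ₑ ≤
      ENNReal.ofReal (2 * min 1 (2 * Real.pi * |(k:ℝ)| * |t|)) * ‖fourierCoeff f k‖ₑ := by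
  have h1 : fourierCoeff (f - transl t f : PerC) k =
      (1 - fourier k (t : AddCircle (1:ℝ))) * fourierCoeff f k := by
    have := map_sub (fourierCoeffL k) f (transl t f)
    rw [fourierCoeffL_apply, fourierCoeffL_apply, fourierCoeffL_apply, fourierCoeff_transl] at this
    rw [this]; ring
  rw [h1, enorm_mul]
  gcongr
  rw [← ofReal_norm]
  apply ENNReal.ofReal_le_ofReal
  have h2 : ‖1 - (fourier k (t : AddCircle (1:ℝ)) : ℂ)‖ ≤ 2 := by
    refine (norm_sub_le _ _).trans ?_
    rw [fourier_apply, Circle.norm_coe]; norm_num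
  have h3 : ‖1 - (fourier k (t : AddCircle (1:ℝ)) : ℂ)‖ ≤ 2 * Real.pi * |(k:ℝ)| * |t| := by
    rw [norm_sub_rev, fourier_coe_apply]
    have := Real.norm_exp_I_mul_ofReal_sub_one_le (x := 2 * Real.pi * k * t)
    calc _ = ‖Complex.exp (Complex.I * (2 * Real.pi * k * t : ℝ)) - 1‖ := by
          congr 3; push_cast; ring
      _ ≤ _ := this
      _ = _ := by simp [abs_of_pos Real.pi_pos]
  have h4 : 0 ≤ 2 * Real.pi * |(k:ℝ)| * |t| := by positivity
  rcases le_total 1 (2 * Real.pi * |(k:ℝ)| * |t|) with h | h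
  · rw [min_eq_left h]; linarith
  · rw [min_eq_right h]; linarith

lemma sconv_mul_const (c : ℝ≥0∞) (B : ℤ → ℝ≥0∞) (k : ℤ) :
    sconv (fun k => c * B k) (fun k => c * B k) k = c ^ 2 * sconv B B k := by
  unfold sconv
  rw [← ENNReal.tsum_mul_left]
  congr 1; ext j; ring

lemma FDom.tsum_ne_top {f : PerC} {A : ℤ → ℝ≥0∞} (h : FDom f A) (hA : ∑' k, A k ≠ ⊤) :
    ∑' k, ‖fourierCoeff f k‖ₑ ≠ ⊤ :=
  ne_top_of_le_ne_top hA (ENNReal.tsum_le_tsum h)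

/-- For a field `F` of unit vectors, the deficit `1 - |avg F|²` is quadratic in the
oscillation of `F`. -/
lemma FDom.one_sub_segAvg_sq {n : ℕ} {F : Fin n → PerC} {A E : ℤ → ℝ≥0∞}
    (hA : ∑' k, A k ≠ ⊤) (hF : ∀ j, FDom (F j) A) (hone : ∑ j, F j ^ 2 = 1) {w : ℝ}
    (hE : ∀ t ∈ Icc (0:ℝ) 1, ∀ j, FDom (F j - transl (t * w) (F j)) E) :
    FDom (1 - ∑ j, segAvg w (F j) ^ 2) (fun k => 2 * n * sconv E E k) := by
  have hT : ∀ t : ℝ, ∑ j, transl t (F j) ^ 2 = 1 := by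
    intro t
    have : transl t (∑ j, F j ^ 2) = 1 := by rw [hone]; rfl
    rw [← this]
    ext x; simp [transl]
  have hcont : ∀ j, Continuous fun t : ℝ => F j - transl (t * w) (F j) := fun j =>
    continuous_const.sub (continuous_transl_mul w (F j))
  have hsub : ∀ j, F j - segAvg w (F j) = ∫ t in (0:ℝ)..1, (F j - transl (t * w) (F j)) := by
    intro j
    rw [intervalIntegral.integral_sub (by simp)
      ((continuous_transl_mul w (F j)).intervalIntegrable _ _)]
    simp [segAvg]
  have hd : ∀ j, FDom (F j - segAvg w (F j)) E := by
    intro j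
    rw [hsub]
    exact FDom.integral (hcont j) fun t ht => hE t ht j
  have hfin : ∀ t : ℝ, ∀ j, ∑' k, ‖fourierCoeff (F j - transl (t * w) (F j) : PerC) k‖ₑ ≠ ⊤ :=
    fun t j => ((hF j).sub ((hF j).translate (t * w))).tsum_ne_top (by
      rw [ENNReal.tsum_add]; exact ENNReal.add_ne_top.2 ⟨hA, hA⟩)
  have hfin' : ∀ j, ∑' k, ‖fourierCoeff (F j - segAvg w (F j) : PerC) k‖ₑ ≠ ⊤ :=
    fun j => ((hF j).sub ((hF j).avg w)).tsum_ne_top (by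
      rw [ENNReal.tsum_add]; exact ENNReal.add_ne_top.2 ⟨hA, hA⟩)
  have key : (1 - ∑ j, segAvg w (F j) ^ 2 : PerC) =
      (∫ t in (0:ℝ)..1, ∑ j, (F j - transl (t * w) (F j)) * (F j - transl (t * w) (F j))) -
        ∑ j, (F j - segAvg w (F j)) * (F j - segAvg w (F j)) := by
    have e1 : ∀ t : ℝ, ∑ j, (F j - transl (t * w) (F j)) * (F j - transl (t * w) (F j)) =
        2 - 2 * ∑ j, F j * transl (t * w) (F j) := by
      intro t
      have : ∀ j, (F j - transl (t * w) (F j)) * (F j - transl (t * w) (F j)) =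
          F j ^ 2 + transl (t * w) (F j) ^ 2 - 2 * (F j * transl (t * w) (F j)) := fun j => by ring
      simp_rw [this]
      rw [Finset.sum_sub_distrib, Finset.sum_add_distrib, hone, hT, ← Finset.mul_sum]
      ring
    have e2 : ∑ j, (F j - segAvg w (F j)) * (F j - segAvg w (F j)) =
        1 + ∑ j, segAvg w (F j) ^ 2 - 2 * ∑ j, F j * segAvg w (F j) := by
      have : ∀ j, (F j - segAvg w (F j)) * (F j - segAvg w (F j)) =
          F j ^ 2 + segAvg w (F j) ^ 2 - 2 * (F j * segAvg w (F j)) := fun j => by ring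
      simp_rw [this]
      rw [Finset.sum_sub_distrib, Finset.sum_add_distrib, hone, ← Finset.mul_sum]
    have e3 : (∫ t in (0:ℝ)..1, ((2 : PerC) - 2 * ∑ j, F j * transl (t * w) (F j))) =
        2 - 2 * ∑ j, F j * segAvg w (F j) := by
      have hc : ∀ j, Continuous fun t : ℝ => F j * transl (t * w) (F j) := fun j =>
        continuous_const.mul (continuous_transl_mul w (F j))
      have hcx : ∀ j, ∀ x : AddCircle (1:ℝ), Continuous fun t : ℝ => transl (t * w) (F j) x :=
        fun j x => (ContinuousMap.evalCLM ℂ x).continuous.comp (continuous_transl_mul w (F j))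
      ext x
      have hc2 : Continuous fun t : ℝ => (2 : PerC) - 2 * ∑ j, F j * transl (t * w) (F j) :=
        continuous_const.sub (continuous_const.mul (continuous_finsetSum _ fun j _ => hc j))
      rw [perC_integral_apply hc2]
      simp only [ContinuousMap.sub_apply, ContinuousMap.mul_apply, ContinuousMap.sum_apply, segAvg,
        perC_integral_apply (continuous_transl_mul w (F _))]
      rw [intervalIntegral.integral_sub (by simp) (Continuous.intervalIntegrable (by fun_prop) _ _),
        intervalIntegral.integral_const_mul, intervalIntegral.integral_finsetSum
        (fun j _ => Continuous.intervalIntegrable (by fun_prop) _ _)]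
      simp_rw [intervalIntegral.integral_const_mul]
      simp
    simp_rw [e1]
    rw [e2, e3]
    ring
  rw [key]
  have h1 : FDom (∫ t in (0:ℝ)..1, ∑ j, (F j - transl (t * w) (F j)) * (F j - transl (t * w) (F j)))
      (fun k => ∑ _j : Fin n, sconv E E k) :=
    FDom.integral (continuous_finsetSum _ fun j _ => (hcont j).mul (hcont j)) fun t ht =>
      FDom.sum _ fun j _ => (hE t ht j).mul (hE t ht j) (hfin t j)
  have h2 : FDom (∑ j, (F j - segAvg w (F j)) * (F j - segAvg w (F j)))
      (fun k => ∑ _j : Fin n, sconv E E k) :=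
    FDom.sum _ fun j _ => (hd j).mul (hd j) (hfin' j)
  refine (h1.sub h2).mono fun k => le_of_eq ?_
  simp; ring

lemma min_one_le_rpow {x τ : ℝ} (hx : 0 ≤ x) (h0 : 0 ≤ τ) (h1 : τ ≤ 1) : min 1 x ≤ x ^ τ := by
  rcases le_total 1 x with h | h
  · rw [min_eq_left h]; exact Real.one_le_rpow h h0
  · rw [min_eq_right h]
    calc x = x ^ (1:ℝ) := (Real.rpow_one x).symm
      _ ≤ x ^ τ := Real.rpow_le_rpow_of_exponent_ge' hx h h0 h1

lemma FDom.one_sub_segAvg_sq_coarse {n : ℕ} {F : Fin n → PerC} {A : ℤ → ℝ≥0∞}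
    (hA : ∑' k, A k ≠ ⊤) (hF : ∀ j, FDom (F j) A) (hone : ∑ j, F j ^ 2 = 1) (w : ℝ) :
    FDom (1 - ∑ j, segAvg w (F j) ^ 2) (fun k => 8 * n * sconv A A k) := by
  have hE : ∀ t ∈ Icc (0:ℝ) 1, ∀ j, FDom (F j - transl (t * w) (F j)) (fun k => 2 * A k) :=
    fun t _ j => ((hF j).sub ((hF j).translate _)).mono fun k => (two_mul _).ge
  refine (FDom.one_sub_segAvg_sq hA hF hone hE).mono fun k => le_of_eq ?_
  rw [sconv_mul_const]; ring

lemma FDom.one_sub_segAvg_sq_fine {n : ℕ} {F : Fin n → PerC} {A : ℤ → ℝ≥0∞}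
    (hA : ∑' k, A k ≠ ⊤) (hF : ∀ j, FDom (F j) A) (hone : ∑ j, F j ^ 2 = 1) {τ : ℝ}
    (h0 : 0 ≤ τ) (h1 : τ ≤ 1) (w : ℝ) :
    FDom (1 - ∑ j, segAvg w (F j) ^ 2) (fun k =>
      (2 * n * ENNReal.ofReal (4 * Real.pi * |w| ^ τ) ^ 2) *
        sconv (fun k => wt τ k * A k) (fun k => wt τ k * A k) k) := by
  have hE : ∀ t ∈ Icc (0:ℝ) 1, ∀ j, FDom (F j - transl (t * w) (F j))
      (fun k => ENNReal.ofReal (4 * Real.pi * |w| ^ τ) * (wt τ k * A k)) := by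
    intro t ht j k
    refine (enorm_fourierCoeff_sub_transl_le (F j) (t * w) k).trans ?_
    beta_reduce
    rw [← mul_assoc, wt_eq_ofReal, ← ENNReal.ofReal_mul (by positivity)]
    refine mul_le_mul' (ENNReal.ofReal_le_ofReal ?_) ?_
    · have hk : |(k:ℝ)| ≤ 1 + |(k:ℝ)| := by linarith
      have htw : |t * w| ≤ |w| := by
        rw [abs_mul, abs_of_nonneg ht.1]
        exact mul_le_of_le_one_left (abs_nonneg _) ht.2
      have hpi : (2 * Real.pi) ^ τ ≤ 2 * Real.pi := by
        calc (2 * Real.pi) ^ τ ≤ (2 * Real.pi) ^ (1:ℝ) :=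
              Real.rpow_le_rpow_of_exponent_le (by linarith [Real.pi_gt_three]) h1
          _ = _ := Real.rpow_one _
      calc 2 * min 1 (2 * Real.pi * |(k:ℝ)| * |t * w|)
          ≤ 2 * (2 * Real.pi * |(k:ℝ)| * |t * w|) ^ τ := by
            gcongr; exact min_one_le_rpow (by positivity) h0 h1
        _ ≤ 2 * (2 * Real.pi * (1 + |(k:ℝ)|) * |w|) ^ τ := by gcongr
        _ = 2 * ((2 * Real.pi) ^ τ * (1 + |(k:ℝ)|) ^ τ * |w| ^ τ) := by
            rw [Real.mul_rpow (by positivity) (abs_nonneg _), Real.mul_rpow (by positivity)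
              (by positivity)]
        _ ≤ 2 * (2 * Real.pi * (1 + |(k:ℝ)|) ^ τ * |w| ^ τ) := by gcongr
        _ = _ := by ring
    · exact hF j k
  refine (FDom.one_sub_segAvg_sq hA hF hone hE).mono fun k => le_of_eq ?_
  rw [sconv_mul_const]; ring

lemma smul_integral_deriv {n : ℕ} {γ : ℝ → Rn n} (hd : ContDiff ℝ 1 γ) (u w : ℝ) :
    w • ∫ t in (0:ℝ)..1, deriv γ (u + t * w) = γ (u + w) - γ u := by
  rw [← intervalIntegral.integral_smul]
  have hc : Continuous (deriv γ) := hd.continuous_deriv le_rfl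
  have h1 : ∀ t ∈ uIcc (0:ℝ) 1, HasDerivAt (fun t : ℝ => γ (u + t * w))
      (w • deriv γ (u + t * w)) t := by
    intro t _
    have := HasDerivAt.scomp t ((hd.differentiable one_ne_zero (u + t * w)).hasDerivAt)
      (((hasDerivAt_id t).mul_const w).const_add u)
    simpa [Function.comp_def] using this
  rw [intervalIntegral.integral_eq_sub_of_hasDerivAt h1]
  · simp
  · exact Continuous.intervalIntegrable (by fun_prop) _ _

lemma exists_chord_arc {n : ℕ} {γ : ℝ → Rn n} (hp : Function.Periodic γ 1)
    (hd : ContDiff ℝ 1 γ) (hinj : PerInjective γ) (harc : ArcLengthParam γ) :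
    ∃ r : ℝ, 0 ≤ r ∧ r < 1 ∧ ∀ u : ℝ, ∀ w ∈ Icc (-(1:ℝ)/2) (1/2), w ≠ 0 →
      (1 - r) * w ^ 2 ≤ ‖γ (u + w) - γ u‖ ^ 2 ∧ ‖γ (u + w) - γ u‖ ^ 2 ≤ w ^ 2 := by
  have hc : Continuous (deriv γ) := hd.continuous_deriv le_rfl
  set q : ℝ × ℝ → ℝ := fun p => ‖∫ t in (0:ℝ)..1, deriv γ (p.1 + t * p.2)‖ with hq
  have hqc : Continuous q := by
    refine Continuous.norm ?_
    exact intervalIntegral.continuous_parametric_intervalIntegral_of_continuous'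
      (f := fun (p : ℝ × ℝ) t => deriv γ (p.1 + t * p.2)) (by fun_prop) 0 1
  have hqpos : ∀ u : ℝ, ∀ w ∈ Icc (-(1:ℝ)/2) (1/2), 0 < q (u, w) := by
    intro u w hw
    rw [hq]
    simp only [norm_pos_iff]
    rcases eq_or_ne w 0 with rfl | hw0
    · have : deriv γ u ≠ 0 := by rw [← norm_pos_iff, harc u]; exact one_pos
      simpa using this
    · intro h0
      have := smul_integral_deriv hd u w
      rw [h0, smul_zero] at this
      obtain ⟨k, hk⟩ := hinj u (u + w) (sub_eq_zero.1 this.symm).symm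
      have hk' : w = k := by linarith
      rw [hk'] at hw hw0
      have h1 : (k:ℝ) < 1 := by linarith [hw.2]
      have h2 : (-1:ℝ) < k := by linarith [hw.1]
      norm_cast at h1 h2 hw0
      omega
  obtain ⟨p, hpK, hpmin⟩ := (isCompact_Icc.prod isCompact_Icc :
    IsCompact (Icc (0:ℝ) 1 ×ˢ Icc (-(1:ℝ)/2) (1/2))).exists_isMinOn
    ⟨(0, 0), by constructor <;> constructor <;> norm_num⟩ hqc.continuousOn
  set m := q p with hm
  have hm0 : 0 < m := hqpos p.1 p.2 hpK.2
  have hupper : ∀ u w : ℝ, ‖γ (u + w) - γ u‖ ^ 2 ≤ w ^ 2 := by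
    intro u w
    have := Convex.norm_image_sub_le_of_norm_deriv_le (f := γ) (s := univ) (C := 1)
      (x := u) (y := u + w) (fun x _ => hd.differentiable one_ne_zero x)
      (fun x _ => (harc x).le) convex_univ (mem_univ _) (mem_univ _)
    rw [← sq_abs w]
    gcongr
    simpa using this
  refine ⟨max 0 (1 - m ^ 2), le_max_left _ _, max_lt one_pos (by nlinarith), fun u w hw hw0 =>
    ⟨?_, hupper u w⟩⟩
  have hfr : ‖γ (u + w) - γ u‖ = ‖γ (Int.fract u + w) - γ (Int.fract u)‖ := by
    have e : ∀ v, γ (Int.fract u + v) = γ (u + v) := by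
      intro v
      have := hp.sub_zsmul_eq (x := u + v) ⌊u⌋
      rw [← this]; congr 1; rw [zsmul_one]; linarith [Int.self_sub_floor u]
    rw [e w]; congr 2
    simpa using (e 0).symm
  rw [hfr, ← smul_integral_deriv hd, norm_smul, mul_pow, Real.norm_eq_abs, sq_abs, mul_comm]
  gcongr
  have h1 : m ≤ q (Int.fract u, w) :=
    hpmin ⟨⟨Int.fract_nonneg u, (Int.fract_lt_one u).le⟩, hw⟩
  calc 1 - max 0 (1 - m ^ 2) ≤ m ^ 2 := by linarith [le_max_right 0 (1 - m ^ 2)]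
    _ ≤ _ := by
      have : q (Int.fract u, w) = ‖∫ t in (0:ℝ)..1, deriv γ (Int.fract u + t * w)‖ := rfl
      rw [← this]; gcongr

/-- The singular pairing against `(1 - ξ)^(-β) - 1`, where `ξ = 1 - |segAvg F|²`. -/
lemma exists_deficit_pairing_bound {n : ℕ} (β : ℝ) {s b τ r : ℝ} (hs : 0 < s) (hb : s < b)
    (h0 : 0 ≤ τ) (h1 : τ ≤ 1) (hr : 0 ≤ r) (hr1 : r < 1) {F : Fin n → PerC} {A : ℤ → ℝ≥0∞}
    (hA : ∑' k, wt (max 0 (s - 1/2)) k * A k ≠ ⊤) (hAb : l2norm b (fun k => wt τ k * A k) ≠ ⊤)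
    (hF : ∀ j, FDom (F j) A) (hone : ∑ j, F j ^ 2 = 1) :
    ∃ C : ℝ≥0∞, C ≠ ⊤ ∧ ∀ (w : ℝ) (y z : Fin n → PerC) (φ : PerC) (H : ℤ → ℝ≥0∞),
      (∀ t, ∃ ξ : ℝ, 0 ≤ ξ ∧ ξ ≤ r ∧ (1 - ∑ j, segAvg w (F j) ^ 2 : PerC) t = ξ ∧
        φ t = ((1 / (1 - ξ) ^ β - 1 : ℝ) : ℂ)) →
      (∀ j, FDom (y j) H) → (∀ j, FDom (z j) A) →
      ‖fourierCoeff (∑ j, y j * z j * φ : PerC) 0‖ₑ ≤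
        C * (ENNReal.ofReal (|w| ^ τ) ^ 2 * l2norm (1/2 - s) H) := by
  set κ := max 0 (s - 1/2) with hκ
  have hκ0 : 0 ≤ κ := le_max_left _ _
  have hA0 : ∑' k, A k ≠ ⊤ := ne_top_of_le_ne_top hA (tsum_le_tsum_wt hκ0 A)
  have hX : ∑' k, wt κ k * (8 * n * sconv A A k) ≠ ⊤ := by
    have : ∀ k, wt κ k * (8 * n * sconv A A k) = 8 * n * (wt κ k * sconv A A k) := fun k => by ring
    simp_rw [this]
    rw [ENNReal.tsum_mul_left]
    exact ENNReal.mul_ne_top (by finiteness)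
      (ne_top_of_le_ne_top (ENNReal.mul_ne_top hA hA) (tsum_wt_sconv_le hκ0 A A))
  obtain ⟨C, hC, hCb⟩ := exists_negPow_pairing_bound β hs hb hr hr1 hX
  set B : ℤ → ℝ≥0∞ := fun k => wt τ k * A k with hB
  refine ⟨n * (C * (2 * n * ENNReal.ofReal (4 * Real.pi) ^ 2 * l2norm b B ^ 2) *
    ∑' k, wt κ k * A k), by finiteness, fun w y z φ H hφ hy hz => ?_⟩
  have hz' : ∀ j, wnorm κ (z j) ≤ ∑' k, wt κ k * A k := fun j => (hz j).wnorm_le κ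
  have e : fourierCoeff (∑ j, y j * z j * φ : PerC) 0 =
      ∑ j, fourierCoeff (y j * z j * φ : PerC) 0 :=
    map_sum (fourierCoeffL 0) _ _
  rw [e]
  refine (enorm_sum_le _ _).trans ?_
  calc ∑ j, ‖fourierCoeff (y j * z j * φ : PerC) 0‖ₑ
      ≤ ∑ _j : Fin n, C * ((2 * n * ENNReal.ofReal (4 * Real.pi * |w| ^ τ) ^ 2) * l2norm b B ^ 2 *
        l2norm (1/2 - s) H) * ∑' k, wt κ k * A k := by
        refine Finset.sum_le_sum fun j _ => ?_
        refine (hCb _ (y j) (z j) φ B H _ (FDom.one_sub_segAvg_sq_coarse hA0 hF hone w) hφ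
          (FDom.one_sub_segAvg_sq_fine hA0 hF hone h0 h1 w) (hy j)
          (ne_top_of_le_ne_top hA (hz' j))).trans ?_
        gcongr
        exact hz' j
    _ = _ := by
        rw [Finset.sum_const, Finset.card_univ, Fintype.card_fin, nsmul_eq_mul,
          ENNReal.ofReal_mul (by positivity)]
        ring

/-- The components of a continuous periodic curve. -/
def compLift {n : ℕ} (g : ℝ → Rn n) (hp : Function.Periodic g 1) (hc : Continuous g) (j : Fin n) :
    PerC :=
  perLift (fun u => g u j) (fun u => by simp only [hp u]) (by fun_prop)

@[simp] lemma compLift_coe {n : ℕ} {g : ℝ → Rn n} (hp : Function.Periodic g 1) (hc : Continuous g)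
    (j : Fin n) (u : ℝ) : compLift g hp hc j (u : AddCircle (1:ℝ)) = (g u j : ℂ) :=
  perLift_coe _ _ u

lemma fourierCoeff_compLift {n : ℕ} {g : ℝ → Rn n} (hp : Function.Periodic g 1) (hc : Continuous g)
    (j : Fin n) (k : ℤ) : fourierCoeff (compLift g hp hc j) k = fCoef g k j := by
  rw [fourierCoeff_perC]; simp [fCoef]

lemma periodic_deriv {E : Type*} [NormedAddCommGroup E] [NormedSpace ℝ E] {g : ℝ → E}
    (hp : Function.Periodic g 1) : Function.Periodic (deriv g) 1 := by
  intro u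
  rw [← deriv_comp_add_const]
  congr 1; ext v; exact hp v

lemma perDeriv_compLift {n : ℕ} {g : ℝ → Rn n} (hp : Function.Periodic g 1) (hd : ContDiff ℝ 1 g)
    (j : Fin n) : PerDeriv (compLift g hp hd.continuous j)
      (compLift (deriv g) (periodic_deriv hp) (hd.continuous_deriv le_rfl) j) := by
  intro u
  simp only [compLift_coe]
  have h1 : HasDerivAt g (deriv g u) u := (hd.differentiable one_ne_zero u).hasDerivAt
  have h2 : HasDerivAt (fun v => g v j) (deriv g u j) u :=
    ((EuclideanSpace.proj j : Rn n →L[ℝ] ℝ).hasFDerivAt.comp_hasDerivAt u h1)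
  exact h2.ofReal_comp

lemma segAvg_compLift {n : ℕ} {g : ℝ → Rn n} (hp : Function.Periodic g 1) (hd : ContDiff ℝ 1 g)
    (j : Fin n) {w : ℝ} (hw : w ≠ 0) (u : ℝ) :
    segAvg w (compLift (deriv g) (periodic_deriv hp) (hd.continuous_deriv le_rfl) j)
      (u : AddCircle (1:ℝ)) = (((g (u + w) - g u) j / w : ℝ) : ℂ) := by
  have h := (perDeriv_compLift hp hd j).mul_segAvg w u
  simp only [compLift_coe] at h
  have hw' : (w : ℂ) ≠ 0 := by exact_mod_cast hw
  push_cast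
  rw [eq_div_iff hw', mul_comm, h, PiLp.sub_apply]
  push_cast; rfl

/-- The function `q^(-β) - 1`. -/
def powDeficit (β : ℝ) (q : PerC) (hq : ∀ t, 0 < (q t).re) : PerC :=
  ⟨fun t => ((1 / (q t).re ^ β - 1 : ℝ) : ℂ), by
    refine Complex.continuous_ofReal.comp (Continuous.sub (Continuous.div continuous_const
      (Continuous.rpow_const (by fun_prop) fun t => Or.inl (hq t).ne') fun t => ?_)
      continuous_const)
    exact (Real.rpow_pos_of_pos (hq t) β).ne'⟩

lemma Rintegrand_eq {n : ℕ} (α : ℝ) (γ h : ℝ → Rn n) {u w q : ℝ} (hw : w ≠ 0) (hq : 0 < q)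
    (hqw : ‖γ (u + w) - γ u‖ ^ 2 = w ^ 2 * q) :
    Rintegrand α γ h u w = |w| ^ (-α) * (2 * (⟪deriv γ u, deriv h u⟫ * (1 / q ^ (α / 2) - 1)) -
      α * (⟪γ (u + w) - γ u, h (u + w) - h u⟫ / w ^ 2 * (1 / q ^ ((α + 2) / 2) - 1))) := by
  have haw : 0 < |w| := abs_pos.2 hw
  have hn : ‖γ (u + w) - γ u‖ = |w| * q ^ (1/2 : ℝ) := by
    rw [← Real.sqrt_sq (norm_nonneg (γ (u + w) - γ u)), hqw, Real.sqrt_mul (sq_nonneg _),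
      Real.sqrt_sq_eq_abs, Real.sqrt_eq_rpow]
  have hpow : ∀ p : ℝ, ‖γ (u + w) - γ u‖ ^ p = |w| ^ p * q ^ (p / 2) := by
    intro p
    rw [hn, Real.mul_rpow haw.le (by positivity), ← Real.rpow_mul hq.le]
    congr 2; ring
  have h2 : |w| ^ (α + 2) = |w| ^ α * w ^ 2 := by
    rw [Real.rpow_add haw, Real.rpow_two, sq_abs]
  unfold Rintegrand
  rw [hpow, hpow, h2, Real.rpow_neg haw.le]
  have p1 : 0 < |w| ^ α := by positivity
  have p2 : 0 < q ^ (α / 2) := by positivity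
  have p3 : 0 < q ^ ((α + 2) / 2) := by positivity
  field_simp

lemma exists_slice_bound {n : ℕ} {α : ℝ} {γ : ℝ → Rn n} (hp : Function.Periodic γ 1)
    (hd : ContDiff ℝ 1 γ) (hinj : PerInjective γ) (harc : ArcLengthParam γ) (hα : 0 ≤ α)
    {s b τ : ℝ} (hs : 0 < s) (hb : s < b) (h0 : 0 ≤ τ) (h1 : τ ≤ 1) {A : ℤ → ℝ≥0∞}
    (hA : ∑' k, wt (max 0 (s - 1/2)) k * A k ≠ ⊤) (hAb : l2norm b (fun k => wt τ k * A k) ≠ ⊤)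
    (hF : ∀ j, FDom (compLift (deriv γ) (periodic_deriv hp) (hd.continuous_deriv le_rfl) j) A) :
    ∃ C : ℝ≥0∞, C ≠ ⊤ ∧ ∀ (h : ℝ → Rn n) (hhp : Function.Periodic h 1) (hhd : ContDiff ℝ 1 h)
      (H : ℤ → ℝ≥0∞),
      (∀ j, FDom (compLift (deriv h) (periodic_deriv hhp) (hhd.continuous_deriv le_rfl) j) H) →
      ∀ w ∈ Icc (-(1:ℝ)/2) (1/2), w ≠ 0 →
      ‖∫ u in (0:ℝ)..1, Rintegrand α γ h u w‖ₑ ≤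
        C * (ENNReal.ofReal (|w| ^ (2 * τ - α)) * l2norm (1/2 - s) H) := by
  obtain ⟨r, hr, hr1, hrw⟩ := exists_chord_arc hp hd hinj harc
  set F := compLift (deriv γ) (periodic_deriv hp) (hd.continuous_deriv le_rfl) with hFdef
  have hone : ∑ j, F j ^ 2 = 1 := by
    refine perC_ext fun u => ?_
    have := harc u
    rw [EuclideanSpace.norm_eq, Real.sqrt_eq_one] at this
    simp only [ContinuousMap.sum_apply, ContinuousMap.pow_apply, hFdef, compLift_coe,
      ContinuousMap.one_apply]
    simp only [Real.norm_eq_abs, sq_abs] at this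
    exact_mod_cast this
  obtain ⟨C₁, hC₁, hb₁⟩ := exists_deficit_pairing_bound (α / 2) hs hb h0 h1 hr hr1 hA hAb hF hone
  obtain ⟨C₂, hC₂, hb₂⟩ :=
    exists_deficit_pairing_bound ((α + 2) / 2) hs hb h0 h1 hr hr1 hA hAb hF hone
  refine ⟨2 * C₁ + ENNReal.ofReal α * C₂, by finiteness, fun h hhp hhd H hH w hw hw0 => ?_⟩
  set Q := compLift (deriv h) (periodic_deriv hhp) (hhd.continuous_deriv le_rfl) with hQdef
  set q : PerC := ∑ j, segAvg w (F j) ^ 2 with hq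
  have hqu : ∀ u : ℝ, q (u : AddCircle (1:ℝ)) = ((‖γ (u + w) - γ u‖ ^ 2 / w ^ 2 : ℝ) : ℂ) := by
    intro u
    rw [hq, EuclideanSpace.norm_sq_eq]
    simp only [ContinuousMap.sum_apply, ContinuousMap.pow_apply, hFdef, segAvg_compLift hp hd _ hw0,
      Real.norm_eq_abs, sq_abs]
    rw [Finset.sum_div]
    push_cast
    simp [div_pow]
  have hw2 : 0 < w ^ 2 := by positivity
  have hqre : ∀ t, (q t).re = q t ∧ 1 - r ≤ (q t).re ∧ (q t).re ≤ 1 := by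
    intro t
    induction t using QuotientAddGroup.induction_on with
    | H u =>
      have := hqu u
      change ((q (u : AddCircle (1:ℝ))).re : ℂ) = q (u : AddCircle (1:ℝ)) ∧
        1 - r ≤ (q (u : AddCircle (1:ℝ))).re ∧ (q (u : AddCircle (1:ℝ))).re ≤ 1
      rw [this, Complex.ofReal_re]
      exact ⟨rfl, (le_div_iff₀ hw2).2 (hrw u w hw hw0).1, (div_le_one hw2).2 (hrw u w hw hw0).2⟩
  have hqpos : ∀ t, 0 < (q t).re := fun t => by linarith [(hqre t).2.1]
  have hξ : ∀ β : ℝ, ∀ t, ∃ ξ : ℝ, 0 ≤ ξ ∧ ξ ≤ r ∧ (1 - q) t = ξ ∧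
      powDeficit β q hqpos t = ((1 / (1 - ξ) ^ β - 1 : ℝ) : ℂ) := by
    intro β t
    obtain ⟨e1, e2, e3⟩ := hqre t
    refine ⟨1 - (q t).re, by linarith, by linarith, ?_, ?_⟩
    · rw [ContinuousMap.sub_apply, ContinuousMap.one_apply]; push_cast; rw [e1]
    · rw [sub_sub_cancel]; rfl
  have B₁ := hb₁ w Q F (powDeficit (α / 2) q hqpos) H (hξ _) hH hF
  have B₂ := hb₂ w (fun j => segAvg w (Q j)) (fun j => segAvg w (F j))
    (powDeficit ((α + 2) / 2) q hqpos) H (hξ _) (fun j => (hH j).avg w) (fun j => (hF j).avg w)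
  set P₁ : PerC := ∑ j, Q j * F j * powDeficit (α / 2) q hqpos with hP₁
  set P₂ : PerC := ∑ j, segAvg w (Q j) * segAvg w (F j) * powDeficit ((α + 2) / 2) q hqpos with hP₂
  have hid : ∀ u : ℝ, ((Rintegrand α γ h u w : ℝ) : ℂ) = ((|w| ^ (-α) : ℝ) : ℂ) *
      (2 * P₁ (u : AddCircle (1:ℝ)) - α * P₂ (u : AddCircle (1:ℝ))) := by
    intro u
    have hqv := hqu u
    have hqr : (q (u : AddCircle (1:ℝ))).re = ‖γ (u + w) - γ u‖ ^ 2 / w ^ 2 := by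
      rw [hqv, Complex.ofReal_re]
    rw [Rintegrand_eq α γ h hw0 (hqpos (u : AddCircle (1:ℝ))) (by rw [hqr]; field_simp)]
    have i1 : P₁ (u : AddCircle (1:ℝ)) = ((⟪deriv γ u, deriv h u⟫ *
        (1 / (q (u : AddCircle (1:ℝ))).re ^ (α / 2) - 1) : ℝ) : ℂ) := by
      rw [hP₁, ← Finset.sum_mul, ContinuousMap.mul_apply, Complex.ofReal_mul]
      congr 1
      simp [ContinuousMap.sum_apply, hQdef, hFdef, PiLp.inner_apply]
    have i2 : P₂ (u : AddCircle (1:ℝ)) = ((⟪γ (u + w) - γ u, h (u + w) - h u⟫ / w ^ 2 *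
        (1 / (q (u : AddCircle (1:ℝ))).re ^ ((α + 2) / 2) - 1) : ℝ) : ℂ) := by
      rw [hP₂, ← Finset.sum_mul, ContinuousMap.mul_apply, Complex.ofReal_mul]
      congr 1
      simp only [ContinuousMap.sum_apply, ContinuousMap.mul_apply, hQdef, hFdef,
        segAvg_compLift hp hd _ hw0, segAvg_compLift hhp hhd _ hw0, PiLp.inner_apply]
      rw [Finset.sum_div]
      push_cast
      refine Finset.sum_congr rfl fun j _ => ?_
      simp
      ring
    rw [i1, i2]
    push_cast
    ring
  have hint : ((∫ u in (0:ℝ)..1, Rintegrand α γ h u w : ℝ) : ℂ) = ((|w| ^ (-α) : ℝ) : ℂ) *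
      (2 * fourierCoeff P₁ 0 - α * fourierCoeff P₂ 0) := by
    have hcont : ∀ f : PerC, Continuous (fun u : ℝ => f (u : AddCircle (1:ℝ))) := fun f =>
      f.continuous.comp (AddCircle.continuous_mk' 1)
    rw [← intervalIntegral.integral_ofReal]
    simp_rw [hid]
    rw [intervalIntegral.integral_const_mul, intervalIntegral.integral_sub,
      intervalIntegral.integral_const_mul, intervalIntegral.integral_const_mul,
      fourierCoeff_perC_zero, fourierCoeff_perC_zero]
    · exact (continuous_const.mul (hcont P₁)).intervalIntegrable _ _
    · exact (continuous_const.mul (hcont P₂)).intervalIntegrable _ _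
  have hnorm : ‖∫ u in (0:ℝ)..1, Rintegrand α γ h u w‖ₑ =
      ‖((∫ u in (0:ℝ)..1, Rintegrand α γ h u w : ℝ) : ℂ)‖ₑ := by
    rw [← ofReal_norm, ← ofReal_norm, Complex.norm_real]
  have haw : 0 < |w| := abs_pos.2 hw0
  rw [hnorm, hint, enorm_mul]
  have hwα : ‖((|w| ^ (-α) : ℝ) : ℂ)‖ₑ = ENNReal.ofReal (|w| ^ (-α)) := by
    rw [← ofReal_norm, Complex.norm_real, Real.norm_of_nonneg (by positivity)]
  have hαα : ‖(α : ℂ)‖ₑ = ENNReal.ofReal α := by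
    rw [← ofReal_norm, Complex.norm_real, Real.norm_of_nonneg hα]
  have h22 : ‖(2 : ℂ)‖ₑ = 2 := by
    rw [← ofReal_norm]; simp
  have hpow : ENNReal.ofReal (|w| ^ (2 * τ - α)) =
      ENNReal.ofReal (|w| ^ (-α)) * ENNReal.ofReal (|w| ^ τ) ^ 2 := by
    rw [← ENNReal.ofReal_pow (by positivity), ← ENNReal.ofReal_mul (by positivity)]
    congr 1
    rw [← Real.rpow_natCast, ← Real.rpow_mul haw.le, ← Real.rpow_add haw]
    congr 1; push_cast; ring
  rw [hwα, hpow]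
  calc _ ≤ ENNReal.ofReal (|w| ^ (-α)) * (2 * ‖fourierCoeff P₁ 0‖ₑ +
        ENNReal.ofReal α * ‖fourierCoeff P₂ 0‖ₑ) := by
        gcongr
        refine (enorm_sub_le).trans ?_
        rw [enorm_mul, enorm_mul, hαα, h22]
    _ ≤ ENNReal.ofReal (|w| ^ (-α)) *
        (2 * (C₁ * (ENNReal.ofReal (|w| ^ τ) ^ 2 * l2norm (1/2 - s) H)) +
        ENNReal.ofReal α * (C₂ * (ENNReal.ofReal (|w| ^ τ) ^ 2 * l2norm (1/2 - s) H))) := by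
        gcongr
    _ = _ := by ring

/-- A majorant of the Fourier coefficients of the components of `deriv g`. -/
def derivMaj {n : ℕ} (g : ℝ → Rn n) (k : ℤ) : ℝ≥0∞ :=
  ENNReal.ofReal (2 * Real.pi * |(k:ℝ)| * Real.sqrt (∑ j, ‖fCoef g k j‖ ^ 2))

lemma norm_fCoef_le {n : ℕ} (g : ℝ → Rn n) (k : ℤ) (j : Fin n) :
    ‖fCoef g k j‖ ≤ Real.sqrt (∑ j, ‖fCoef g k j‖ ^ 2) := by
  refine Real.le_sqrt_of_sq_le ?_
  exact Finset.single_le_sum (f := fun j => ‖fCoef g k j‖ ^ 2) (fun _ _ => sq_nonneg _)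
    (Finset.mem_univ j)

lemma FDom.derivMaj {n : ℕ} {g : ℝ → Rn n} (hp : Function.Periodic g 1) (hd : ContDiff ℝ 1 g)
    (j : Fin n) : FDom (compLift (deriv g) (periodic_deriv hp) (hd.continuous_deriv le_rfl) j)
      (derivMaj g) := by
  intro k
  rw [(perDeriv_compLift hp hd j).fourierCoeff_eq, fourierCoeff_compLift, ← ofReal_norm]
  refine ENNReal.ofReal_le_ofReal ?_
  rw [norm_mul]
  have : ‖(2 * Real.pi * Complex.I * k : ℂ)‖ = 2 * Real.pi * |(k:ℝ)| := by
    simp [abs_of_pos Real.pi_pos]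
  rw [this]
  gcongr
  exact norm_fCoef_le g k j

lemma one_add_abs_rpow_le (c x : ℝ) : (1 + |x|) ^ (2 * c) ≤ 2 ^ |c| * (1 + x ^ 2) ^ c := by
  have h0 : 0 < 1 + |x| := by positivity
  have h1 : (1 + |x|) ^ (2 * c) = ((1 + |x|) ^ 2) ^ c := by
    rw [Real.rpow_mul h0.le, Real.rpow_two]
  rw [h1]
  have hx := sq_abs x
  have hx0 := abs_nonneg x
  rcases le_total 0 c with hc | hc
  · rw [abs_of_nonneg hc, ← Real.mul_rpow (by norm_num) (by positivity)]
    refine Real.rpow_le_rpow (by positivity) ?_ hc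
    nlinarith [sq_nonneg (1 - |x|)]
  · calc ((1 + |x|) ^ 2) ^ c ≤ (1 + x ^ 2) ^ c :=
          Real.rpow_le_rpow_of_nonpos (by positivity) (by nlinarith) hc
      _ ≤ _ := le_mul_of_one_le_left (by positivity)
        (Real.one_le_rpow (by norm_num) (abs_nonneg c))

lemma l2norm_derivMaj_sq_le {n : ℕ} (c : ℝ) {g : ℝ → Rn n}
    (hs : Summable (fun k : ℤ => (1 + (k : ℝ) ^ 2) ^ (c + 1) * ∑ j, ‖fCoef g k j‖ ^ 2)) :
    l2norm c (derivMaj g) ^ 2 ≤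
      ENNReal.ofReal ((2 * Real.pi) ^ 2 * 2 ^ |c| * fNormSq (c + 1) g) := by
  rw [l2norm_sq, ENNReal.ofReal_mul (by positivity), fNormSq,
    ENNReal.ofReal_tsum_of_nonneg (fun k => by positivity) hs, ← ENNReal.tsum_mul_left]
  refine ENNReal.tsum_le_tsum fun k => ?_
  rw [wt_eq_ofReal, derivMaj, ← ENNReal.ofReal_mul (by positivity),
    ← ENNReal.ofReal_pow (by positivity), ← ENNReal.ofReal_mul (by positivity)]
  refine ENNReal.ofReal_le_ofReal ?_
  set S := ∑ j, ‖fCoef g k j‖ ^ 2 with hS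
  have hS0 : 0 ≤ S := by positivity
  have h1 : ((1 + |(k:ℝ)|) ^ c) ^ 2 = (1 + |(k:ℝ)|) ^ (2 * c) := by
    rw [mul_comm, Real.rpow_mul (by positivity), Real.rpow_two]
  have h2 : (1 + (k:ℝ) ^ 2) ^ (c + 1) = (1 + (k:ℝ) ^ 2) ^ c * (1 + (k:ℝ) ^ 2) :=
    Real.rpow_add_one (by positivity) c
  calc _ = (2 * Real.pi) ^ 2 * ((1 + |(k:ℝ)|) ^ (2 * c) * |(k:ℝ)| ^ 2 * Real.sqrt S ^ 2) := by
        rw [← h1]; ring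
    _ ≤ (2 * Real.pi) ^ 2 * (2 ^ |c| * (1 + (k:ℝ) ^ 2) ^ c * (1 + (k:ℝ) ^ 2) * S) := by
        rw [Real.sq_sqrt hS0, sq_abs]
        gcongr
        · exact one_add_abs_rpow_le c k
        · linarith
    _ = _ := by rw [h2]; ring

lemma l2norm_derivMaj_ne_top {n : ℕ} {c : ℝ} {g : ℝ → Rn n} (hg : MemHF (c + 1) g) :
    l2norm c (derivMaj g) ≠ ⊤ := by
  intro h
  have := l2norm_derivMaj_sq_le c hg.2.2
  rw [h] at this
  simp at this

lemma l2norm_wt_mul (b τ : ℝ) (F : ℤ → ℝ≥0∞) :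
    l2norm b (fun k => wt τ k * F k) = l2norm (b + τ) F := by
  unfold l2norm
  simp_rw [wt_add, mul_assoc]

lemma tsum_wt_ne_top_of_l2norm {a κ : ℝ} (h : 1/2 < a - κ) {F : ℤ → ℝ≥0∞}
    (hF : l2norm a F ≠ ⊤) : ∑' k, wt κ k * F k ≠ ⊤ := by
  have h1 := tsum_mul_sq_le (fun k => wt (-(a - κ)) k) (fun k => wt a k * F k)
  have e : ∀ k, wt (-(a - κ)) k * (wt a k * F k) = wt κ k * F k := fun k => by
    rw [← mul_assoc, ← wt_add]; congr 2; ring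
  simp_rw [e, wt_sq] at h1
  rw [← l2norm_sq] at h1
  have h2 : ∑' k, wt (2 * (-(a - κ))) k ≠ ⊤ := by
    have := (tsum_wt_lt_top (c := 2 * (a - κ)) (by linarith)).ne
    convert this using 4; ring
  intro htop
  rw [htop] at h1
  have : (∑' k, wt (2 * (-(a - κ))) k) * l2norm a F ^ 2 ≠ ⊤ := by finiteness
  rw [ENNReal.top_pow two_ne_zero, top_le_iff] at h1
  exact this h1

lemma contDiff_of_tsum_derivMaj {n : ℕ} {g : ℝ → Rn n} (hp : Function.Periodic g 1)
    (hc : Continuous g) (hs : ∑' k, derivMaj g k ≠ ⊤) : ContDiff ℝ 1 g := by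
  rw [contDiff_euclidean]
  intro j
  have hs1 : Summable (fun k : ℤ => 2 * Real.pi * |(k:ℝ)| * ‖fCoef g k j‖) := by
    have : Summable (fun k : ℤ => (derivMaj g k).toReal) := ENNReal.summable_toReal hs
    refine Summable.of_nonneg_of_le (fun k => by positivity) (fun k => ?_) this
    rw [derivMaj, ENNReal.toReal_ofReal (by positivity)]
    gcongr
    exact norm_fCoef_le g k j
  set G := compLift g hp hc j with hG
  have hcoef : ∀ k, fourierCoeff G k = fCoef g k j := fun k => fourierCoeff_compLift hp hc j k
  have hs0 : Summable (fourierCoeff G) := by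
    refine Summable.of_norm_bounded_eventually hs1 ?_
    have : ∀ᶠ k : ℤ in cofinite, k ≠ 0 := (finite_singleton (0:ℤ)).compl_mem_cofinite
    filter_upwards [this] with k hk
    rw [hcoef]
    have : (1:ℝ) ≤ |(k:ℝ)| := by exact_mod_cast Int.one_le_abs hk
    have := Real.pi_gt_three
    refine le_mul_of_one_le_left (norm_nonneg _) ?_
    nlinarith
  have hs2 : Summable (fun k : ℤ => (fCoef g k j * (2 * Real.pi * Complex.I * k)) •
      (fourier k : PerC)) := by
    refine Summable.of_norm ?_
    refine hs1.congr fun k => ?_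
    rw [norm_smul, fourier_norm, norm_mul]
    simp [abs_of_pos Real.pi_pos]
    ring
  set D : PerC := ∑' k : ℤ, (fCoef g k j * (2 * Real.pi * Complex.I * k)) • (fourier k : PerC)
    with hD
  have hGD : PerDeriv G D := by
    intro u
    have h1 := hasDerivAt_tsum (u := fun k : ℤ => 2 * Real.pi * |(k:ℝ)| * ‖fCoef g k j‖)
      (g := fun (k : ℤ) (v : ℝ) => fCoef g k j * fourier k (v : AddCircle (1:ℝ)))
      (g' := fun (k : ℤ) (v : ℝ) => fCoef g k j *
        (2 * Real.pi * Complex.I * k / (1:ℝ) * fourier k (v : AddCircle (1:ℝ))))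
      (y₀ := 0) hs1 (fun k v => (hasDerivAt_fourier 1 k v).const_mul _) (fun k v => ?_) ?_ u
    · have e1 : (fun v : ℝ => ∑' k : ℤ, fCoef g k j * fourier k (v : AddCircle (1:ℝ))) =
          fun v : ℝ => G (v : AddCircle (1:ℝ)) := by
        ext v
        have := has_pointwise_sum_fourier_series_of_summable hs0 (v : AddCircle (1:ℝ))
        rw [← this.tsum_eq]
        congr 1; ext k; rw [hcoef, smul_eq_mul]
      have e2 : ∑' k : ℤ, fCoef g k j *
          (2 * Real.pi * Complex.I * k / (1:ℝ) * fourier k (u : AddCircle (1:ℝ))) =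
          D (u : AddCircle (1:ℝ)) := by
        have := hs2.hasSum.mapL (ContinuousMap.evalCLM ℂ (u : AddCircle (1:ℝ)))
        rw [← hD] at this
        refine Eq.trans ?_ this.tsum_eq
        congr 1; ext k
        simp; ring
      rw [e1, e2] at h1
      exact h1
    · rw [norm_mul, norm_mul, fourier_apply, Circle.norm_coe]
      simp [abs_of_pos Real.pi_pos]
      exact le_of_eq (by ring)
    · have := (has_pointwise_sum_fourier_series_of_summable hs0 ((0:ℝ) : AddCircle (1:ℝ))).summable
      refine this.congr fun k => ?_
      rw [hcoef, smul_eq_mul]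
  have hcont : Continuous fun u : ℝ => D (u : AddCircle (1:ℝ)) :=
    D.continuous.comp (AddCircle.continuous_mk' 1)
  have hCD : ContDiff ℝ 1 (fun u : ℝ => G (u : AddCircle (1:ℝ))) := by
    rw [contDiff_one_iff_deriv]
    refine ⟨fun u => (hGD u).differentiableAt, ?_⟩
    have : deriv (fun u : ℝ => G (u : AddCircle (1:ℝ))) = fun u : ℝ => D (u : AddCircle (1:ℝ)) :=
      funext fun u => (hGD u).deriv
    rw [this]; exact hcont
  have e : (fun u => g u j) = fun u : ℝ => Complex.reCLM (G (u : AddCircle (1:ℝ))) := by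
    ext u; simp [hG]
  rw [e]
  exact Complex.reCLM.contDiff.comp hCD

lemma tsum_enorm_fourierCoeff_sq (g : PerC) : ∑' k, ‖fourierCoeff g k‖ₑ ^ 2 =
    ∫⁻ u in Ioc (0:ℝ) 1, ENNReal.ofReal (‖g (u : AddCircle (1:ℝ))‖ ^ 2) := by
  have h := hasSum_sq_fourierCoeff (ContinuousMap.toLp (E := ℂ) 2
    (AddCircle.haarAddCircle (T := (1:ℝ))) ℂ g)
  simp_rw [fourierCoeff_toLp] at h
  have hcoe := ContinuousMap.coeFn_toLp (p := 2) (AddCircle.haarAddCircle (T := (1:ℝ))) (𝕜 := ℂ) g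
  have h1 : ∫ t, ‖ContinuousMap.toLp (E := ℂ) 2 (AddCircle.haarAddCircle (T := (1:ℝ))) ℂ g t‖ ^ 2
      ∂(AddCircle.haarAddCircle (T := (1:ℝ))) =
      ∫ t, ‖g t‖ ^ 2 ∂(AddCircle.haarAddCircle (T := (1:ℝ))) := by
    refine integral_congr_ae ?_
    filter_upwards [hcoe] with t ht
    rw [ht]
  set N : PerC := ⟨fun t => ((‖g t‖ ^ 2 : ℝ) : ℂ), by fun_prop⟩ with hN
  have h2 : ((∫ t, ‖g t‖ ^ 2 ∂(AddCircle.haarAddCircle (T := (1:ℝ))) : ℝ) : ℂ) =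
      ((∫ u in (0:ℝ)..1, ‖g (u : AddCircle (1:ℝ))‖ ^ 2 : ℝ) : ℂ) := by
    have e1 : fourierCoeff N 0 = ((∫ t, ‖g t‖ ^ 2
        ∂(AddCircle.haarAddCircle (T := (1:ℝ))) : ℝ) : ℂ) := by
      rw [← integral_complex_ofReal]
      unfold fourierCoeff
      congr 1; ext t; simp [hN]
    rw [← e1, fourierCoeff_perC_zero, ← intervalIntegral.integral_ofReal]
    rfl
  have h3 : (∫ t, ‖g t‖ ^ 2 ∂(AddCircle.haarAddCircle (T := (1:ℝ)))) =
      ∫ u in (0:ℝ)..1, ‖g (u : AddCircle (1:ℝ))‖ ^ 2 := by exact_mod_cast h2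
  rw [h1, h3] at h
  have e : ∀ k, ‖fourierCoeff g k‖ₑ ^ 2 = ENNReal.ofReal (‖fourierCoeff g k‖ ^ 2) := fun k => by
    rw [← ofReal_norm, ENNReal.ofReal_pow (norm_nonneg _)]
  have hcont : Continuous (fun u : ℝ => ‖g (u : AddCircle (1:ℝ))‖ ^ 2) :=
    ((g.continuous.comp (AddCircle.continuous_mk' 1)).norm).pow 2
  simp_rw [e]
  rw [← ENNReal.ofReal_tsum_of_nonneg (fun k => sq_nonneg _) h.summable, h.tsum_eq,
    intervalIntegral.integral_of_le zero_le_one, ofReal_integral_eq_lintegral_ofReal]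
  · exact hcont.integrableOn_Ioc
  · exact ae_of_all _ fun u => sq_nonneg _

lemma one_le_norm_one_sub_fourier {k : ℤ} (hk : k ≠ 0) {w : ℝ}
    (hw : w ∈ Ioo (1 / (4 * |(k:ℝ)|)) (1 / (2 * |(k:ℝ)|))) :
    1 ≤ ‖(fourier k (w : AddCircle (1:ℝ)) : ℂ) - 1‖ := by
  have hk0 : 0 < |(k:ℝ)| := by positivity
  have hre : (fourier k (w : AddCircle (1:ℝ)) : ℂ).re = Real.cos (2 * Real.pi * (|(k:ℝ)| * w)) := by
    rw [fourier_coe_apply]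
    have : (2 * Real.pi * Complex.I * k * w / (1:ℝ) : ℂ) =
        ((2 * Real.pi * (k * w) : ℝ) : ℂ) * Complex.I := by push_cast; ring
    rw [this, Complex.exp_ofReal_mul_I_re]
    rcases abs_choice (k:ℝ) with h | h
    · rw [h]
    · rw [h, ← Real.cos_neg]; congr 1; ring
  have h1 : 1 / 4 ≤ |(k:ℝ)| * w := by
    have := (div_lt_iff₀ (by positivity)).1 hw.1
    linarith
  have h2 : |(k:ℝ)| * w ≤ 1 / 2 := by
    have := (lt_div_iff₀ (by positivity)).1 hw.2
    linarith
  have hpi := Real.pi_pos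
  have hcos : Real.cos (2 * Real.pi * (|(k:ℝ)| * w)) ≤ 0 :=
    Real.cos_nonpos_of_pi_div_two_le_of_le (by nlinarith) (by nlinarith)
  rw [norm_sub_rev]
  refine le_trans ?_ (Complex.re_le_norm _)
  rw [Complex.sub_re, hre, Complex.one_re]
  linarith

lemma abs_le_lintegral_fourier {α : ℝ} (hα : 2 ≤ α) (k : ℤ) :
    ENNReal.ofReal |(k:ℝ)| ≤ ∫⁻ w in Ioo (-(1:ℝ)/2) (1/2),
      ‖(fourier k (w : AddCircle (1:ℝ)) : ℂ) - 1‖ₑ ^ 2 * ENNReal.ofReal (1 / |w| ^ α) := by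
  rcases eq_or_ne k 0 with rfl | hk
  · simp
  have hk0 : 0 < |(k:ℝ)| := by positivity
  have hk1 : (1:ℝ) ≤ |(k:ℝ)| := by exact_mod_cast Int.one_le_abs hk
  set J := Ioo (1 / (4 * |(k:ℝ)|)) (1 / (2 * |(k:ℝ)|)) with hJ
  have hsub : J ⊆ Ioo (-(1:ℝ)/2) (1/2) := by
    refine Ioo_subset_Ioo ?_ ?_
    · have : 0 < 1 / (4 * |(k:ℝ)|) := by positivity
      linarith
    · rw [div_le_div_iff₀ (by positivity) (by norm_num)]; linarith
  calc ENNReal.ofReal |(k:ℝ)| = ENNReal.ofReal (4 * |(k:ℝ)| ^ 2) * volume J := by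
        rw [hJ, Real.volume_Ioo, ← ENNReal.ofReal_mul (by positivity)]
        congr 1; field_simp; norm_num
    _ = ∫⁻ w in J, ENNReal.ofReal (4 * |(k:ℝ)| ^ 2) := by rw [setLIntegral_const]
    _ ≤ ∫⁻ w in J, ‖(fourier k (w : AddCircle (1:ℝ)) : ℂ) - 1‖ₑ ^ 2 *
        ENNReal.ofReal (1 / |w| ^ α) := by
        refine setLIntegral_mono' measurableSet_Ioo fun w hw => ?_
        have h1 := one_le_norm_one_sub_fourier hk hw
        have hw0 : 0 < w := lt_trans (by positivity) hw.1
        have hw1 : w ≤ 1 := by linarith [(hsub hw).2]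
        have h2 : 4 * |(k:ℝ)| ^ 2 ≤ 1 / |w| ^ α := by
          rw [abs_of_pos hw0]
          have h3 : w ^ α ≤ w ^ 2 := by
            rw [← Real.rpow_two]; exact Real.rpow_le_rpow_of_exponent_ge hw0 hw1 hα
          have h4 : w * (2 * |(k:ℝ)|) ≤ 1 := ((lt_div_iff₀ (by positivity)).1 hw.2).le
          have h5 : 0 < w ^ α := by positivity
          rw [le_div_iff₀ h5]
          calc 4 * |(k:ℝ)| ^ 2 * w ^ α ≤ 4 * |(k:ℝ)| ^ 2 * w ^ 2 := by gcongr
            _ = (w * (2 * |(k:ℝ)|)) ^ 2 := by ring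
            _ ≤ 1 := pow_le_one₀ (by positivity) h4
        calc _ ≤ 1 * ENNReal.ofReal (1 / |w| ^ α) := by
              rw [one_mul]; exact ENNReal.ofReal_le_ofReal h2
          _ ≤ _ := by
              gcongr
              rw [← ofReal_norm]
              exact one_le_pow₀ (by rw [ENNReal.one_le_ofReal]; exact h1)
    _ ≤ _ := lintegral_mono_set hsub

lemma tsum_abs_mul_sq_ne_top {α : ℝ} (hα : 2 ≤ α) (f : PerC)
    (hf : ∫⁻ u in Ioc (0:ℝ) 1, ∫⁻ w in Ioo (-(1:ℝ)/2) (1/2), ENNReal.ofReal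
      (‖f ((u + w : ℝ) : AddCircle (1:ℝ)) - f (u : AddCircle (1:ℝ))‖ ^ 2 / |w| ^ α) ≠ ⊤) :
    ∑' k : ℤ, ENNReal.ofReal |(k:ℝ)| * ‖fourierCoeff f k‖ₑ ^ 2 ≠ ⊤ := by
  refine ne_top_of_le_ne_top hf ?_
  have hcont : Continuous (fun u : ℝ => f (u : AddCircle (1:ℝ))) :=
    f.continuous.comp (AddCircle.continuous_mk' 1)
  rw [lintegral_lintegral_swap (by
    refine Measurable.aemeasurable ?_
    have h1 : Continuous fun p : ℝ × ℝ => f ((p.1 + p.2 : ℝ) : AddCircle (1:ℝ)) :=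
      hcont.comp (continuous_fst.add continuous_snd)
    have h2 : Continuous fun p : ℝ × ℝ => f (p.1 : AddCircle (1:ℝ)) := hcont.comp continuous_fst
    exact ENNReal.measurable_ofReal.comp
      ((((h1.sub h2).norm).pow 2).measurable.div (by fun_prop)))]
  have hsl : ∀ w : ℝ, ∫⁻ u in Ioc (0:ℝ) 1, ENNReal.ofReal
      (‖f ((u + w : ℝ) : AddCircle (1:ℝ)) - f (u : AddCircle (1:ℝ))‖ ^ 2 / |w| ^ α) =
      ∑' k : ℤ, ‖(fourier k (w : AddCircle (1:ℝ)) : ℂ) - 1‖ₑ ^ 2 * ENNReal.ofReal (1 / |w| ^ α) *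
        ‖fourierCoeff f k‖ₑ ^ 2 := by
    intro w
    have h := tsum_enorm_fourierCoeff_sq (transl w f - f)
    have e1 : ∀ k, fourierCoeff (transl w f - f : PerC) k =
        (fourier k (w : AddCircle (1:ℝ)) - 1) * fourierCoeff f k := by
      intro k
      have := map_sub (fourierCoeffL k) (transl w f) f
      rw [fourierCoeffL_apply, fourierCoeffL_apply, fourierCoeffL_apply,
        fourierCoeff_transl] at this
      rw [this]; ring
    simp_rw [e1, enorm_mul, mul_pow] at h
    have e2 : ∀ u : ℝ, ENNReal.ofReal
        (‖f ((u + w : ℝ) : AddCircle (1:ℝ)) - f (u : AddCircle (1:ℝ))‖ ^ 2 / |w| ^ α) =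
        ENNReal.ofReal (1 / |w| ^ α) *
          ENNReal.ofReal (‖(transl w f - f) (u : AddCircle (1:ℝ))‖ ^ 2) := by
      intro u
      rw [← ENNReal.ofReal_mul (by positivity), ContinuousMap.sub_apply, transl_coe]
      congr 1; ring
    simp_rw [e2]
    rw [lintegral_const_mul' _ _ ENNReal.ofReal_ne_top, ← h, ← ENNReal.tsum_mul_left]
    congr 1; ext k; ring
  simp_rw [hsl]
  have hmeas : ∀ k : ℤ, Measurable fun w : ℝ =>
      ‖(fourier k (w : AddCircle (1:ℝ)) : ℂ) - 1‖ₑ ^ 2 * ENNReal.ofReal (1 / |w| ^ α) := by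
    intro k
    have : Continuous fun w : ℝ => (fourier k (w : AddCircle (1:ℝ)) : ℂ) - 1 :=
      (((fourier k : PerC).continuous).comp (AddCircle.continuous_mk' 1)).sub continuous_const
    exact (this.measurable.enorm.pow_const 2).mul (by fun_prop)
  rw [lintegral_tsum fun k => ((hmeas k).mul_const _).aemeasurable]
  refine ENNReal.tsum_le_tsum fun k => ?_
  rw [lintegral_mul_const _ (hmeas k)]
  gcongr
  exact abs_le_lintegral_fourier hα k

lemma MemH1.summable {n : ℕ} {α s : ℝ} (hα : 2 ≤ α) (hs : 0 ≤ s) {h : ℝ → Rn n}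
    (hh : MemH1 ((α - 1) / 2) h) :
    Summable (fun k : ℤ => (1 + (k : ℝ) ^ 2) ^ (3/2 - s) * ∑ j, ‖fCoef h k j‖ ^ 2) := by
  obtain ⟨hp, hd, hg⟩ := hh
  have hcomp : ∀ j, Summable (fun k : ℤ => |(k:ℝ)| ^ 3 * ‖fCoef h k j‖ ^ 2) := by
    intro j
    set f := compLift (deriv h) (periodic_deriv hp) (hd.continuous_deriv le_rfl) j with hf
    have h1 : ∑' k : ℤ, ENNReal.ofReal |(k:ℝ)| * ‖fourierCoeff f k‖ₑ ^ 2 ≠ ⊤ := by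
      refine tsum_abs_mul_sq_ne_top hα f (ne_top_of_le_ne_top hg.ne ?_)
      unfold gagliardoSq
      refine lintegral_mono fun u => lintegral_mono fun w => ENNReal.ofReal_le_ofReal ?_
      have e : 1 + 2 * ((α - 1) / 2) = α := by ring
      rw [e, hf, compLift_coe, compLift_coe]
      gcongr
      rw [← Complex.ofReal_sub, Complex.norm_real, ← PiLp.sub_apply]
      exact PiLp.norm_apply_le _ j
    have h2 := ENNReal.summable_toReal h1
    have hpi := Real.pi_pos
    refine (h2.mul_left (1 / (2 * Real.pi) ^ 2)).congr fun k => ?_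
    rw [(perDeriv_compLift hp hd j).fourierCoeff_eq, fourierCoeff_compLift, ENNReal.toReal_mul,
      ENNReal.toReal_ofReal (abs_nonneg _), ENNReal.toReal_pow, toReal_enorm, norm_mul]
    have : ‖(2 * Real.pi * Complex.I * k : ℂ)‖ = 2 * Real.pi * |(k:ℝ)| := by
      simp [abs_of_pos Real.pi_pos]
    rw [this]
    field_simp
  have hsum : Summable (fun k : ℤ => 2 ^ (3/2 : ℝ) * ∑ j, |(k:ℝ)| ^ 3 * ‖fCoef h k j‖ ^ 2) :=
    (summable_sum fun j _ => hcomp j).mul_left _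
  refine Summable.of_norm_bounded_eventually hsum ?_
  have : ∀ᶠ k : ℤ in cofinite, k ≠ 0 := (finite_singleton (0:ℤ)).compl_mem_cofinite
  filter_upwards [this] with k hk
  have hk1 : (1:ℝ) ≤ |(k:ℝ)| := by exact_mod_cast Int.one_le_abs hk
  rw [Real.norm_of_nonneg (by positivity), ← Finset.mul_sum, ← mul_assoc]
  gcongr
  have hk2 : 1 ≤ (k:ℝ) ^ 2 := by rw [← sq_abs]; exact one_le_pow₀ hk1
  calc (1 + (k:ℝ) ^ 2) ^ (3/2 - s) ≤ (1 + (k:ℝ) ^ 2) ^ (3/2 : ℝ) :=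
        Real.rpow_le_rpow_of_exponent_le (by linarith) (by linarith)
    _ ≤ (2 * (k:ℝ) ^ 2) ^ (3/2 : ℝ) := by gcongr; linarith
    _ = 2 ^ (3/2 : ℝ) * |(k:ℝ)| ^ 3 := by
        rw [Real.mul_rpow (by norm_num) (by positivity), ← sq_abs, ← Real.rpow_natCast,
          ← Real.rpow_mul (abs_nonneg _), ← Real.rpow_natCast]
        norm_num

lemma abs_Rval_le {n : ℕ} {α p : ℝ} (hp : -1 < p) {γ h : ℝ → Rn n} {K : ℝ} (hK : 0 ≤ K)
    (hb : ∀ w ∈ Icc (-(1:ℝ)/2) (1/2), w ≠ 0 →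
      ‖∫ u in (0:ℝ)..1, Rintegrand α γ h u w‖ ≤ K * |w| ^ p) :
    |Rval α γ h| ≤ K * ∫ w in Icc (-(1:ℝ)/2) (1/2), |w| ^ p := by
  unfold Rval
  by_cases hint : IntegrableOn (fun q : ℝ × ℝ => Rintegrand α γ h q.1 q.2)
      ((Ioc (0:ℝ) 1) ×ˢ (Icc (-(1:ℝ)/2) (1/2))) volume
  · have hpw : IntegrableOn (fun w : ℝ => |w| ^ p) (Icc (-(1:ℝ)/2) (1/2)) volume := by
      rw [integrableOn_Icc_iff_integrableOn_Ioc, ← intervalIntegrable_iff_integrableOn_Ioc_of_le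
        (by norm_num)]
      have h1 : IntervalIntegrable (fun w : ℝ => |w| ^ p) volume 0 (1/2) := by
        refine (intervalIntegral.intervalIntegrable_rpow' (a := 0) (b := 1/2) hp).congr_ae ?_
        refine (ae_restrict_iff' measurableSet_uIoc).2 (ae_of_all _ fun w hw => ?_)
        rw [uIoc_of_le (by norm_num)] at hw
        simp only [abs_of_pos hw.1]
      have h2 : IntervalIntegrable (fun w : ℝ => |w| ^ p) volume (-(1:ℝ)/2) 0 := by
        have := h1.comp_sub_left 0
        simp only [zero_sub, abs_neg, sub_zero] at this
        have e : -(1:ℝ)/2 = -(1/2) := by ring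
        rw [e]
        exact this.symm
      exact h2.trans h1
    unfold IntegrableOn at hint
    rw [Measure.volume_eq_prod, ← Measure.prod_restrict] at hint ⊢
    rw [integral_prod_symm _ hint, ← integral_const_mul, ← Real.norm_eq_abs]
    refine norm_integral_le_of_norm_le (hpw.const_mul K) ?_
    have h0 : ∀ᵐ w : ℝ ∂(volume.restrict (Icc (-(1:ℝ)/2) (1/2))), w ≠ 0 :=
      ae_restrict_of_ae (Measure.ae_ne volume 0)
    filter_upwards [h0, ae_restrict_mem measurableSet_Icc] with w hw hwI
    have := hb w hwI hw
    rwa [intervalIntegral.integral_of_le zero_le_one] at this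
  · rw [integral_undef hint, abs_zero]
    exact mul_nonneg hK (integral_nonneg fun w => by positivity)

/-- For an injective arc-length curve `γ ∈ H^{(α+1)/2+σ,2}` with `σ > 0` and
every `0 < σ̂ < σ`, `h ↦ R(γ,h)` is bounded by a constant times the `H^{3/2−σ̂,2}`-norm of `h`
for all `h ∈ H^{(α+1)/2,2}`. -/
theorem statement13 {n : ℕ} (hn : 2 ≤ n) {α σ : ℝ} (hα : α ∈ Ioo (2:ℝ) 3) (hσ : 0 < σ)
    {γ : ℝ → Rn n} (hγ : MemHF ((α + 1) / 2 + σ) γ) (hinj : PerInjective γ)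
    (harc : ArcLengthParam γ) :
    ∀ σh ∈ Ioo (0:ℝ) σ, ∃ C : ℝ,
      ∀ h : ℝ → Rn n, MemH1 ((α - 1) / 2) h →
        |Rval α γ h| ≤ C * Real.sqrt (fNormSq (3/2 - σh) h) := by
  intro s hs
  obtain ⟨hα2, hα3⟩ := hα
  set ε := min ((σ - s) / 2) ((3 - α) / 2) with hε
  have hε0 : 0 < ε := lt_min (by linarith [hs.2]) (by linarith)
  have hε1 : ε ≤ (σ - s) / 2 := min_le_left _ _
  have hε2 : ε ≤ (3 - α) / 2 := min_le_right _ _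
  set τ := (α - 1) / 2 + ε with hτ
  set a := (α - 1) / 2 + σ with ha
  set b := σ - ε with hbdef
  have hbτ : b + τ = a := by rw [hbdef, hτ, ha]; ring
  have hL : l2norm a (derivMaj γ) ≠ ⊤ := by
    refine l2norm_derivMaj_ne_top ?_
    convert hγ using 1
    rw [ha]; ring
  have hp := hγ.1
  have hA : ∑' k, wt (max 0 (s - 1/2)) k * derivMaj γ k ≠ ⊤ := by
    refine tsum_wt_ne_top_of_l2norm ?_ hL
    have : max 0 (s - 1/2) < a - 1/2 :=
      max_lt (by linarith) (by linarith [hs.2])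
    linarith
  have hA0 : ∑' k, derivMaj γ k ≠ ⊤ :=
    ne_top_of_le_ne_top hA (tsum_le_tsum_wt (le_max_left _ _) _)
  have hd : ContDiff ℝ 1 γ := contDiff_of_tsum_derivMaj hp hγ.2.1 hA0
  obtain ⟨C, hC, hCb⟩ := exists_slice_bound (α := α) (τ := τ) (b := b) hp hd hinj harc
    (by linarith) hs.1 (by linarith [hs.2]) (by linarith) (by linarith) hA
    (by rw [l2norm_wt_mul, hbτ]; exact hL) (FDom.derivMaj hp hd)
  set D : ℝ := (2 * Real.pi) ^ 2 * 2 ^ |1/2 - s| with hD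
  have hD0 : 0 ≤ D := by positivity
  refine ⟨C.toReal * Real.sqrt D * ∫ w in Icc (-(1:ℝ)/2) (1/2), |w| ^ (2 * τ - α), fun h hh => ?_⟩
  have hsum := hh.summable hα2.le hs.1.le
  have hexp : 1/2 - s + 1 = 3/2 - s := by ring
  have hLh : l2norm (1/2 - s) (derivMaj h) ≤
      ENNReal.ofReal (Real.sqrt D * Real.sqrt (fNormSq (3/2 - s) h)) := by
    refine le_of_sq_le_sq_ennreal ?_
    refine (l2norm_derivMaj_sq_le (1/2 - s) (by rw [hexp]; exact hsum)).trans (le_of_eq ?_)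
    have hN : 0 ≤ fNormSq (3/2 - s) h := tsum_nonneg fun k => by positivity
    rw [hexp, ← ENNReal.ofReal_pow (by positivity), mul_pow (Real.sqrt D), Real.sq_sqrt hD0,
      Real.sq_sqrt hN]
  refine (abs_Rval_le (p := 2 * τ - α) (by rw [hτ]; linarith)
    (K := C.toReal * Real.sqrt D * Real.sqrt (fNormSq (3/2 - s) h)) (by positivity)
    fun w hw hw0 => ?_).trans (le_of_eq (by ring))
  have hslice := (hCb h hh.1 hh.2.1 (derivMaj h) (FDom.derivMaj hh.1 hh.2.1) w hw hw0).trans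
    (mul_le_mul_right (mul_le_mul_right hLh _) C)
  rw [← ENNReal.ofReal_toReal hC, ← ENNReal.ofReal_mul (by positivity),
    ← ENNReal.ofReal_mul (by positivity), ← ofReal_norm,
    ENNReal.ofReal_le_ofReal_iff (by positivity)] at hslice
  exact hslice.trans (le_of_eq (by ring))

end
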